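/- arXiv:2306.12445 — 7 statements merged into one kernel-verified Lean document; each statement's English description precedes it below -/
import Mathlib

section
/- There exists a family (f_β)_{β ∈ I} of bijections of ℝ indexed by a set I of cardinality continuum such that: the group homomorphism from the free group on I to the symmetric group of ℝ sending each generator β to f_β is injective (i.e., the f_β freely generate a free subgroup of the group of autobijections of ℝ under composition), and every element of this subgroup other than the identity is a Hamel function (in particular each f_β itself is a Hamel function). -/
/-- The graph of a function `f : ℝ → ℝ`, as a subset of `ℝ × ℝ`. -/
def graph (f : ℝ → ℝ) : Set (ℝ × ℝ) := Set.range fun x => (x, f x)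

/-- `f : ℝ → ℝ` is a Hamel function if its graph is a basis of `ℝ × ℝ`
as a vector space over `ℚ`, i.e. the graph is `ℚ`-linearly independent and
spans `ℝ × ℝ` over `ℚ`. -/
def IsHamelFunction (f : ℝ → ℝ) : Prop :=
  LinearIndependent ℚ ((↑) : graph f → ℝ × ℝ) ∧
    Submodule.span ℚ (graph f) = ⊤

open Cardinal

lemma transf {α τ : Type} (hτ : #τ = continuum) (Good : Set α → Prop) (Sat : τ → Set α → Prop)
    (mono : ∀ t S S', S ⊆ S' → Sat t S → Sat t S')
    (chain : ∀ C : Set (Set α), IsChain (· ⊆ ·) C → (∀ S ∈ C, Good S) → Good (⋃₀ C))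
    (ext : ∀ t S, Good S → #S < continuum → ∃ N : Set α, N.Finite ∧ Good (S ∪ N) ∧ Sat t (S ∪ N)) :
    ∃ S, Good S ∧ ∀ t, Sat t S := by
  have ext' : ∀ t S, ∃ N : Set α, N.Finite ∧ (Good S → #S < continuum →
      Good (S ∪ N) ∧ Sat t (S ∪ N)) := by
    intro t S
    by_cases h : Good S ∧ #S < continuum
    · obtain ⟨N, h1, h2⟩ := ext t S h.1 h.2
      exact ⟨N, h1, fun _ _ => h2⟩
    · exact ⟨∅, Set.finite_empty, fun a b => (h ⟨a, b⟩).elim⟩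
  choose N hfin hN using ext'
  obtain ⟨_, _, ho⟩ := exists_ord_eq_type_lt τ
  let M : τ → Set α := WellFounded.fix (wellFounded_lt (α := τ))
    (fun t rec => N t (⋃ s : Set.Iio t, rec s.1 s.2))
  let U : τ → Set α := fun t => ⋃ s : Set.Iio t, M s.1
  have hM : ∀ t, M t = N t (U t) := fun t => WellFounded.fix_eq _ _ _
  have hMfin : ∀ t, (M t).Finite := fun t => by rw [hM]; exact hfin _ _
  have hUcard : ∀ t, #(U t) < continuum := by
    intro t
    refine (mk_iUnion_le _).trans_lt ?_
    refine mul_lt_of_lt aleph0_le_continuum (hτ ▸ mk_Iio_lt t ho) ?_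
    refine lt_of_le_of_lt (ciSup_le' fun s => ?_) aleph0_lt_continuum
    exact (hMfin _).lt_aleph0.le
  let P : τ → Set α := fun t => U t ∪ M t
  have hP : ∀ t x, x ∈ P t ↔ ∃ s ≤ t, x ∈ M s := by
    intro t x
    simp only [P, U, Set.mem_union, Set.mem_iUnion, Subtype.exists, Set.mem_Iio, exists_prop]
    constructor
    · rintro (⟨s, h, h'⟩ | h)
      · exact ⟨s, h.le, h'⟩
      · exact ⟨t, le_rfl, h⟩
    · rintro ⟨s, h, h'⟩
      rcases h.lt_or_eq with h | rfl
      · exact Or.inl ⟨s, h, h'⟩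
      · exact Or.inr h'
  have hPmono : ∀ s t, s ≤ t → P s ⊆ P t := by
    intro s t h x
    rw [hP, hP]
    rintro ⟨r, h1, h2⟩
    exact ⟨r, h1.trans h, h2⟩
  have hchain : ∀ T : Set τ, IsChain (· ⊆ ·) (P '' T) := by
    rintro T _ ⟨s, -, rfl⟩ _ ⟨t, -, rfl⟩ -
    rcases le_total s t with h | h
    · exact Or.inl (hPmono _ _ h)
    · exact Or.inr (hPmono _ _ h)
  have key : ∀ t, Good (P t) ∧ Sat t (P t) := by
    intro t
    induction t using WellFoundedLT.induction with
    | ind t ih =>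
      have hU : U t = ⋃₀ (P '' Set.Iio t) := by
        ext x
        simp only [U, Set.sUnion_image, Set.mem_iUnion, hP, Subtype.exists, Set.mem_Iio, exists_prop]
        constructor
        · rintro ⟨s, h, h'⟩; exact ⟨s, h, s, le_rfl, h'⟩
        · rintro ⟨s, h, r, h', h''⟩; exact ⟨r, h'.trans_lt h, h''⟩
      have hg : Good (U t) := by
        rw [hU]
        refine chain _ (hchain _) ?_
        rintro _ ⟨s, hs, rfl⟩
        exact (ih s hs).1
      have := hN t (U t) hg (hUcard t)
      rw [← hM] at this
      exact this
  refine ⟨⋃₀ (P '' Set.univ), chain _ (hchain _) ?_, fun t => ?_⟩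
  · rintro _ ⟨s, hs, rfl⟩
    exact (key s).1
  · exact mono t (P t) _ (Set.subset_sUnion_of_mem ⟨t, trivial, rfl⟩) (key t).2

/-- value set -/
noncomputable def hV {G : Type} (S : Set ((G × ℝ) × ℝ)) : Submodule ℚ ℝ := Submodule.span ℚ (Prod.snd '' S)

/-- pairs related by `w` -/
def hR {G : Type} [Group G] (w : G) (S : Set ((G × ℝ) × ℝ)) : Set (ℝ × ℝ) :=
  {q | ∃ g r, ((g, r), q.1) ∈ S ∧ ((w * g, r), q.2) ∈ S}

/-- good partial maps -/
def hGood {G : Type} [Group G] (S : Set ((G × ℝ) × ℝ)) : Prop :=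
  (∀ x y y', (x, y) ∈ S → (x, y') ∈ S → y = y') ∧
  (∀ x x' y, (x, y) ∈ S → (x', y) ∈ S → x = x') ∧
  ∀ w : G, w ≠ 1 → LinearIndepOn ℚ id (hR w S)

lemma hR_mono {G : Type} [Group G] (w : G) {S S' : Set ((G × ℝ) × ℝ)} (h : S ⊆ S') :
    hR w S ⊆ hR w S' := by
  rintro q ⟨g, r, h1, h2⟩
  exact ⟨g, r, h h1, h h2⟩

lemma hR_V {G : Type} [Group G] (w : G) (S : Set ((G × ℝ) × ℝ)) {q : ℝ × ℝ} (h : q ∈ hR w S) :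
    q.1 ∈ hV S ∧ q.2 ∈ hV S := by
  obtain ⟨g, r, h1, h2⟩ := h
  exact ⟨Submodule.subset_span ⟨_, h1, rfl⟩, Submodule.subset_span ⟨_, h2, rfl⟩⟩

lemma hfresh (A : Set ℝ) (hA : #A < continuum) : ∃ e, e ∉ Submodule.span ℚ A := by
  by_contra! h
  have ht : Submodule.span ℚ A = ⊤ := by ext x; simp [h x]
  have h1 := rank_span_le (R := ℚ) A
  have h2 : Module.rank ℚ ℝ = #ℝ := Module.Free.rank_eq_mk_of_infinite_lt ℚ ℝ
    (by simpa [mk_real] using aleph0_lt_continuum)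
  rw [ht, rank_top, h2, mk_real] at h1
  exact absurd h1 hA.not_ge

lemma hfresh' (A : Set ℝ) (hA : #A < continuum) : ∃ e, e ∉ A := by
  obtain ⟨e, he⟩ := hfresh A hA
  exact ⟨e, fun h => he (Submodule.subset_span h)⟩

lemma card_ins {α : Type} (A : Set α) (a : α) (hA : #A < continuum) :
    #(insert a A : Set α) < continuum :=
  mk_insert_le.trans_lt (add_lt_of_lt aleph0_le_continuum hA
    (one_lt_aleph0.trans aleph0_lt_continuum))

lemma hChain {G : Type} [Group G] (C : Set (Set ((G × ℝ) × ℝ))) (hC : IsChain (· ⊆ ·) C)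
    (h : ∀ S ∈ C, hGood S) : hGood (⋃₀ C) := by
  have two : ∀ a b, a ∈ ⋃₀ C → b ∈ ⋃₀ C → ∃ S ∈ C, a ∈ S ∧ b ∈ S := by
    rintro a b ⟨S, hS, ha⟩ ⟨T, hT, hb⟩
    rcases hC.total hS hT with h | h
    · exact ⟨T, hT, h ha, hb⟩
    · exact ⟨S, hS, ha, h hb⟩
  refine ⟨?_, ?_, ?_⟩
  · intro x y y' h1 h2
    obtain ⟨S, hS, a, b⟩ := two _ _ h1 h2
    exact (h S hS).1 _ _ _ a b
  · intro x y y' h1 h2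
    obtain ⟨S, hS, a, b⟩ := two _ _ h1 h2
    exact (h S hS).2.1 _ _ _ a b
  · intro w hw
    have : hR w (⋃₀ C) = ⋃₀ (hR w '' C) := by
      ext q
      constructor
      · rintro ⟨g, r, h1, h2⟩
        obtain ⟨S, hS, a, b⟩ := two _ _ h1 h2
        exact ⟨_, ⟨S, hS, rfl⟩, g, r, a, b⟩
      · rintro ⟨_, ⟨S, hS, rfl⟩, hq⟩
        exact hR_mono w (Set.subset_sUnion_of_mem hS) hq
    rw [this]
    apply linearIndepOn_sUnion_of_directed
    · apply IsChain.directedOn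
      rintro _ ⟨S, hS, rfl⟩ _ ⟨T, hT, rfl⟩ -
      rcases hC.total hS hT with h | h
      · exact Or.inl (hR_mono w h)
      · exact Or.inr (hR_mono w h)
    · rintro _ ⟨S, hS, rfl⟩
      exact (h S hS).2.2 w hw

lemma indep_sub {s N : Set (ℝ × ℝ)} (hs : LinearIndepOn ℚ id s) (hN : N.Subsingleton)
    (h : ∀ q ∈ N, q ∉ Submodule.span ℚ s) : LinearIndepOn ℚ id (s ∪ N) := by
  rcases hN.eq_empty_or_singleton with rfl | ⟨q, rfl⟩
  · simpa using hs
  · rw [Set.union_singleton]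
    exact hs.id_insert (h q rfl)

lemma span_fst {s : Set (ℝ × ℝ)} {T : Submodule ℚ ℝ} (h : ∀ q ∈ s, q.1 ∈ T) {q : ℝ × ℝ}
    (hq : q ∈ Submodule.span ℚ s) : q.1 ∈ T :=
  (Submodule.span_le (p := T.comap (LinearMap.fst ℚ ℝ ℝ))).2 h hq

lemma span_snd {s : Set (ℝ × ℝ)} {T : Submodule ℚ ℝ} (h : ∀ q ∈ s, q.2 ∈ T) {q : ℝ × ℝ}
    (hq : q ∈ Submodule.span ℚ s) : q.2 ∈ T :=
  (Submodule.span_le (p := T.comap (LinearMap.snd ℚ ℝ ℝ))).2 h hq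

lemma ext1 {G : Type} [Group G] (S : Set ((G × ℝ) × ℝ)) (hS : hGood S) (hc : #S < continuum)
    (x : G × ℝ) : ∃ N : Set ((G × ℝ) × ℝ), N.Finite ∧ hGood (S ∪ N) ∧ ∃ y, (x, y) ∈ S ∪ N := by
  by_cases hx : ∃ y, (x, y) ∈ S
  · exact ⟨∅, Set.finite_empty, by simpa using hS, by simpa using hx⟩
  push Not at hx
  obtain ⟨e, he⟩ := hfresh (Prod.snd '' S) (mk_image_le.trans_lt hc)
  have hval : ∀ z y, (z, y) ∈ S → y ∈ hV S := fun z y h => Submodule.subset_span ⟨_, h, rfl⟩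
  change e ∉ hV S at he
  refine ⟨{(x, e)}, Set.finite_singleton _, ⟨?_, ?_, ?_⟩, e, by simp⟩
  · intro z y y' h1 h2
    simp only [Set.mem_union, Set.mem_singleton_iff, Prod.mk.injEq] at h1 h2
    have := hS.1 z y y'
    grind
  · intro z y y' h1 h2
    simp only [Set.mem_union, Set.mem_singleton_iff, Prod.mk.injEq] at h1 h2
    have := hS.2.1 z y y'
    grind
  · intro w hw
    let N1 : Set (ℝ × ℝ) := {q | q.1 = e ∧ ((w * x.1, x.2), q.2) ∈ S}
    let N2 : Set (ℝ × ℝ) := {q | q.2 = e ∧ ((w⁻¹ * x.1, x.2), q.1) ∈ S}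
    have hsub : hR w (S ∪ {(x, e)}) ⊆ (hR w S ∪ N1) ∪ N2 := by
      rintro ⟨a, b⟩ ⟨g, r, h1, h2⟩
      simp only [Set.mem_union, Set.mem_singleton_iff, Prod.mk.injEq] at h1 h2
      rcases h1 with h1 | ⟨rfl, rfl⟩
      · rcases h2 with h2 | ⟨rfl, rfl⟩
        · exact Or.inl (Or.inl ⟨g, r, h1, h2⟩)
        · exact Or.inr ⟨rfl, by simpa using h1⟩
      · rcases h2 with h2 | ⟨h2, rfl⟩
        · exact Or.inl (Or.inr ⟨rfl, h2⟩)
        · simp at h2; exact (hw h2).elim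
    refine LinearIndepOn.mono (indep_sub (indep_sub (hS.2.2 w hw) ?_ ?_) ?_ ?_) hsub
    · rintro ⟨a, b⟩ ⟨h1, h2⟩ ⟨a', b'⟩ ⟨h3, h4⟩
      have := hS.1 _ _ _ h2 h4
      simp_all
    · rintro ⟨a, b⟩ ⟨h1, h2⟩ hq
      have := span_fst (fun q h => (hR_V w S h).1) hq
      simp_all
    · rintro ⟨a, b⟩ ⟨h1, h2⟩ ⟨a', b'⟩ ⟨h3, h4⟩
      have := hS.1 _ _ _ h2 h4
      simp_all
    · rintro ⟨a, b⟩ ⟨h1, h2⟩ hq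
      have := span_snd (T := hV S) (fun q h => ?_) hq
      · simp_all
      · rcases h with h | h
        · exact (hR_V w S h).2
        · exact hval _ _ h.2

lemma ext2 {G : Type} [Group G] (S : Set ((G × ℝ) × ℝ)) (hS : hGood S) (hc : #S < continuum)
    (y : ℝ) : ∃ N : Set ((G × ℝ) × ℝ), N.Finite ∧ hGood (S ∪ N) ∧ ∃ x, (x, y) ∈ S ∪ N := by
  by_cases hx : ∃ x, (x, y) ∈ S
  · exact ⟨∅, Set.finite_empty, by simpa using hS, by simpa using hx⟩
  push Not at hx
  obtain ⟨r0, hr0⟩ := hfresh' ((fun z => z.1.2) '' S) (mk_image_le.trans_lt hc)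
  have hr : ∀ g a, ((g, r0), a) ∉ S := fun g a h => hr0 ⟨_, h, rfl⟩
  refine ⟨{((1, r0), y)}, Set.finite_singleton _, ⟨?_, ?_, ?_⟩, _, Or.inr rfl⟩
  · intro z y y' h1 h2
    simp only [Set.mem_union, Set.mem_singleton_iff, Prod.mk.injEq] at h1 h2
    have := hS.1 z y y'
    grind
  · intro z y y' h1 h2
    simp only [Set.mem_union, Set.mem_singleton_iff, Prod.mk.injEq] at h1 h2
    have := hS.2.1 z y y'
    grind
  · intro w hw
    refine (hS.2.2 w hw).mono ?_
    rintro ⟨a, b⟩ ⟨g, r, h1, h2⟩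
    simp only [Set.mem_union, Set.mem_singleton_iff, Prod.mk.injEq] at h1 h2
    refine ⟨g, r, ?_, ?_⟩ <;> grind

lemma indep_pair {s : Set (ℝ × ℝ)} {T : Submodule ℚ ℝ} (hs : LinearIndepOn ℚ id s)
    (hT : ∀ q ∈ s, q.1 ∈ T) {u v p p' : ℝ} (hu : u ∈ T) (hp : p ∉ T)
    (h : (u, v) ∉ Submodule.span ℚ s) :
    LinearIndepOn ℚ id (insert (u + 2 * p, v + 2 * p') (insert (p, p') s)) := by
  refine (hs.id_insert fun hq => hp (span_fst hT hq)).id_insert fun hq => h ?_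
  obtain ⟨a, z, hz, e⟩ := Submodule.mem_span_insert.1 hq
  have e1 : u = (a - 2) • p + z.1 := by
    have := congrArg Prod.fst e
    simp [sub_smul, Rat.smul_def] at this ⊢
    linarith
  have e2 : v = (a - 2) • p' + z.2 := by
    have := congrArg Prod.snd e
    simp [sub_smul, Rat.smul_def] at this ⊢
    linarith
  have ha : a - 2 = 0 := by
    by_contra ha
    apply hp
    rw [← T.smul_mem_iff ha]
    have : (a - 2) • p = u - z.1 := by rw [e1]; ring
    rw [this]
    exact T.sub_mem hu (span_fst hT hz)
  rw [ha] at e1 e2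
  have : (u, v) = z := by ext <;> simp [e1, e2]
  rwa [this]

lemma ext3 {G : Type} [Group G] (hG : ∀ g : G, g ≠ 1 → g ≠ g⁻¹)
    (S : Set ((G × ℝ) × ℝ)) (hS : hGood S) (hc : #S < continuum)
    (w : G) (hw : w ≠ 1) (u v : ℝ) : ∃ N : Set ((G × ℝ) × ℝ), N.Finite ∧ hGood (S ∪ N) ∧
      (u, v) ∈ Submodule.span ℚ (hR w (S ∪ N)) := by
  by_cases hx : (u, v) ∈ Submodule.span ℚ (hR w S)
  · exact ⟨∅, Set.finite_empty, by simpa using hS, by simpa using hx⟩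
  have hx' : (v, u) ∉ Submodule.span ℚ (hR w⁻¹ S) := by
    intro h
    apply hx
    have : Submodule.span ℚ (hR w⁻¹ S) ≤ (Submodule.span ℚ (hR w S)).comap
        (LinearEquiv.prodComm ℚ ℝ ℝ).toLinearMap := by
      rw [Submodule.span_le]
      rintro ⟨a, b⟩ ⟨g, r, h1, h2⟩
      exact Submodule.subset_span ⟨w⁻¹ * g, r, h2, by simpa using h1⟩
    exact this h
  have hc1 : #((fun z : (G × ℝ) × ℝ => z.1.2) '' S : Set ℝ) < continuum := mk_image_le.trans_lt hc
  obtain ⟨r1, hr1⟩ := hfresh' _ hc1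
  obtain ⟨r2, hr2⟩ := hfresh' _ (card_ins _ r1 hc1)
  have k1 : ∀ g a, ((g, r1), a) ∉ S := fun g a h => hr1 ⟨_, h, rfl⟩
  have k2 : ∀ g a, ((g, r2), a) ∉ S := fun g a h => hr2 (Or.inr ⟨_, h, rfl⟩)
  have k3 : r2 ≠ r1 := fun h => hr2 (Or.inl h)
  let A : Set ℝ := insert u (insert v (Prod.snd '' S))
  have hA : #A < continuum := card_ins _ _ (card_ins _ _ (mk_image_le.trans_lt hc))
  obtain ⟨p, hp⟩ := hfresh A hA
  obtain ⟨p', hp'⟩ := hfresh _ (card_ins _ p hA)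
  let T := Submodule.span ℚ A
  have hTT : ∀ z, z ∈ T → z ∈ Submodule.span ℚ (insert p A) :=
    fun z hz => Submodule.span_mono (Set.subset_insert _ _) hz
  have huT : u ∈ T := Submodule.subset_span (by simp [A])
  have hvT : v ∈ T := Submodule.subset_span (by simp [A])
  have hVT : ∀ z, z ∈ hV S → z ∈ T := fun z hz => 
    Submodule.span_mono (fun a ha => Or.inr (Or.inr ha)) hz
  have hval : ∀ z y, (z, y) ∈ S → y ∈ T := fun z y h => hVT _ (Submodule.subset_span ⟨_, h, rfl⟩)
  have hp'T : p' ∉ T := fun h => hp' (hTT _ h)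
  have hpp : ∀ (c : ℚ) (z : ℝ), z ∈ T → p' ≠ c • p + z := by
    intro c z hz h
    apply hp'
    rw [h]
    exact add_mem (Submodule.smul_mem _ _ (Submodule.subset_span (by simp))) (hTT _ hz)
  have d1 : p ≠ p' := fun h => hpp 1 0 T.zero_mem (by simp [h])
  have d2 : u + 2 * p ≠ p' := fun h => hpp 2 u huT (by rw [← h, Rat.smul_def]; push_cast; ring)
  have d3 : p ≠ v + 2 * p' := fun h => hpp (1/2) (-(1/2 : ℚ) • v) (T.smul_mem _ hvT)
    (by simp only [Rat.smul_def]; push_cast; linarith)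
  have d4 : u + 2 * p ≠ v + 2 * p' := fun h => hpp 1 ((1/2 : ℚ) • (u - v))
    (T.smul_mem _ (T.sub_mem huT hvT)) (by simp only [Rat.smul_def]; push_cast; linarith)
  have d5 : u + 2 * p ≠ p := fun h => hp (by
    have : p = -u := by linarith
    rw [this]; exact T.neg_mem huT)
  have d6 : v + 2 * p' ≠ p' := fun h => hp'T (by
    have : p' = -v := by linarith
    rw [this]; exact T.neg_mem hvT)
  have m1 : u + 2 * p ∉ T := fun h => hp (by
    have : p = (1/2 : ℚ) • ((u + 2 * p) - u) := by simp only [Rat.smul_def]; push_cast; ring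
    rw [this]; exact T.smul_mem _ (T.sub_mem h huT))
  have m2 : v + 2 * p' ∉ T := fun h => hp'T (by
    have : p' = (1/2 : ℚ) • ((v + 2 * p') - v) := by simp only [Rat.smul_def]; push_cast; ring
    rw [this]; exact T.smul_mem _ (T.sub_mem h hvT))
  change p ∉ T at hp
  have hww := hG w hw
  have hinv : w⁻¹ ≠ 1 := by simpa using hw
  generalize hq : u + 2 * p = q at *
  generalize hq' : v + 2 * p' = q' at *
  let N : Set ((G × ℝ) × ℝ) := {((1, r1), p), ((w, r1), p'), ((1, r2), q), ((w, r2), q')}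
  have hN : ∀ g r a, ((g, r), a) ∈ S ∪ N ↔ ((g, r), a) ∈ S ∨ (g = 1 ∧ r = r1 ∧ a = p) ∨
      (g = w ∧ r = r1 ∧ a = p') ∨ (g = 1 ∧ r = r2 ∧ a = q) ∨ (g = w ∧ r = r2 ∧ a = q') := by
    intro g r a
    simp only [N, Set.mem_union, Set.mem_insert_iff, Set.mem_singleton_iff, Prod.mk.injEq, and_assoc]
  have hRN : ∀ w' ≠ 1, ∀ z ∈ hR w' (S ∪ N), z ∈ hR w' S ∨
      (w' = w ∧ (z = (p, p') ∨ z = (q, q'))) ∨ (w' = w⁻¹ ∧ (z = (p', p) ∨ z = (q', q))) := by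
    rintro w' hw' ⟨a, b⟩ ⟨g, r, h1, h2⟩
    rw [hN] at h1 h2
    dsimp only at h1 h2
    rcases h1 with h1 | ⟨rfl, rfl, rfl⟩ | ⟨rfl, rfl, rfl⟩ | ⟨rfl, rfl, rfl⟩ | ⟨rfl, rfl, rfl⟩ <;>
    rcases h2 with h2 | ⟨h2, h3, rfl⟩ | ⟨h2, h3, rfl⟩ | ⟨h2, h3, rfl⟩ | ⟨h2, h3, rfl⟩
    · exact Or.inl ⟨g, r, h1, h2⟩
    all_goals first
      | (exfalso; subst h3; first | exact k1 _ _ h1 | exact k2 _ _ h1)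
      | (exfalso; first | exact k1 _ _ h2 | exact k2 _ _ h2)
      | (exfalso; exact k3 h3)
      | (exfalso; exact k3 h3.symm)
      | (exfalso; simp at h2; exact hw' h2)
      | (simp at h2; simp [h2]; done)
      | (have := eq_inv_of_mul_eq_one_left h2; simp [this]; done)
  refine ⟨N, by simp [N], ⟨?_, ?_, ?_⟩, ?_⟩
  · rintro ⟨g, r⟩ y y' h1 h2
    rw [hN] at h1 h2
    have := hS.1 (g, r) y y'
    grind
  · rintro ⟨g, r⟩ ⟨g', r'⟩ y h1 h2
    rw [hN] at h1 h2
    have := hS.2.1 (g, r) (g', r') y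
    have h3 := hval (g, r) y
    have h4 := hval (g', r') y
    grind
  · intro w' hw'
    have hsT : ∀ z ∈ hR w' S, z.1 ∈ T := fun z hz => hVT _ (hR_V w' S hz).1
    by_cases c1 : w' = w
    · subst c1
      have := indep_pair (p' := p') (hS.2.2 w' hw') hsT huT hp hx
      rw [hq, hq'] at this
      refine this.mono fun z hz => ?_
      have := hRN w' hw' z hz
      simp only [Set.mem_insert_iff]
      tauto
    · by_cases c2 : w' = w⁻¹
      · subst c2
        have := indep_pair (p' := p) (hS.2.2 _ hw') hsT hvT hp'T hx'
        rw [hq, hq'] at this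
        refine this.mono fun z hz => ?_
        have := hRN _ hw' z hz
        simp only [Set.mem_insert_iff]
        tauto
      · refine (hS.2.2 w' hw').mono fun z hz => ?_
        have := hRN w' hw' z hz
        tauto
  · have a1 : (p, p') ∈ hR w (S ∪ N) := ⟨1, r1, by simp [N], by simp [N]⟩
    have a2 : (q, q') ∈ hR w (S ∪ N) := ⟨1, r2, by simp [N], by simp [N]⟩
    have : (u, v) = (q, q') - (2 : ℚ) • (p, p') := by
      ext <;> simp [Rat.smul_def, ← hq, ← hq']
    rw [this]
    exact sub_mem (Submodule.subset_span a2) (Submodule.smul_mem _ _ (Submodule.subset_span a1))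

lemma exists_total {G : Type} [Group G] (hc : #G ≤ continuum) (hG : ∀ g : G, g ≠ 1 → g ≠ g⁻¹) :
    ∃ S : Set ((G × ℝ) × ℝ), hGood S ∧ (∀ x, ∃ y, (x, y) ∈ S) ∧ (∀ y, ∃ x, (x, y) ∈ S) ∧
      ∀ w : G, w ≠ 1 → Submodule.span ℚ (hR w S) = ⊤ := by
  have hcard : #((G × ℝ) ⊕ ℝ ⊕ (G × ℝ × ℝ)) = continuum := by
    have h0 : #G ≠ 0 := mk_ne_zero G
    have h1 : #G * continuum = continuum := mul_eq_right aleph0_le_continuum hc h0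
    simp [mk_real, h1]
  obtain ⟨S, hS, hsat⟩ := transf hcard (hGood (G := G))
    (fun t S => match t with
      | .inl x => ∃ y, (x, y) ∈ S
      | .inr (.inl y) => ∃ x, (x, y) ∈ S
      | .inr (.inr q) => q.1 ≠ 1 → q.2 ∈ Submodule.span ℚ (hR q.1 S))
    (by
      rintro (x | y | q) S S' h
      · rintro ⟨y, hy⟩; exact ⟨y, h hy⟩
      · rintro ⟨y, hy⟩; exact ⟨y, h hy⟩
      · intro h1 h2; exact Submodule.span_mono (hR_mono _ h) (h1 h2))
    hChain
    (by
      rintro (x | y | ⟨w, u, v⟩) S h h'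
      · exact ext1 S h h' x
      · exact ext2 S h h' y
      · by_cases hw : w = 1
        · exact ⟨∅, Set.finite_empty, by simpa using h, fun h => (h hw).elim⟩
        · obtain ⟨N, h1, h2, h3⟩ := ext3 hG S h h' w hw u v
          exact ⟨N, h1, h2, fun _ => h3⟩)
  refine ⟨S, hS, fun x => hsat (.inl x), fun y => hsat (.inr (.inl y)), fun w hw => ?_⟩
  ext q
  simpa using hsat (.inr (.inr (w, q))) hw

theorem main_group {G : Type} [Group G] (hc : #G ≤ continuum) (hG : ∀ g : G, g ≠ 1 → g ≠ g⁻¹) :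
    ∃ F : G →* Equiv.Perm ℝ, ∀ w, w ≠ 1 → IsHamelFunction ⇑(F w) := by
  obtain ⟨S, hS, ht, hs, hspan⟩ := exists_total hc hG
  choose φ hφ using ht
  have hmem : ∀ x y, (x, y) ∈ S ↔ φ x = y := fun x y =>
    ⟨fun h => hS.1 _ _ _ (hφ x) h, fun h => h ▸ hφ x⟩
  have hbij : Function.Bijective φ := by
    constructor
    · intro a b h
      exact hS.2.1 a b (φ a) (hφ a) (h ▸ hφ b)
    · intro y
      obtain ⟨x, hx⟩ := hs y
      exact ⟨x, (hmem _ _).1 hx⟩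
  let e := Equiv.ofBijective φ hbij
  let A : G →* Equiv.Perm (G × ℝ) :=
    { toFun := fun w => (Equiv.mulLeft w).prodCongr (Equiv.refl ℝ)
      map_one' := by ext x <;> simp
      map_mul' := by intro a b; ext x <;> simp [mul_assoc] }
  refine ⟨(e.permCongrHom.toMonoidHom).comp A, fun w hw => ?_⟩
  have hg : graph (((e.permCongrHom.toMonoidHom).comp A) w) = hR w S := by
    ext ⟨a, b⟩
    simp only [graph, hR, hmem, Set.mem_range, Set.mem_ofPred_eq]
    constructor
    · rintro ⟨x, hx⟩
      obtain ⟨⟨g, r⟩, rfl⟩ := e.surjective x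
      refine ⟨g, r, congrArg Prod.fst hx, ?_⟩
      have := congrArg Prod.snd hx
      simp [A, Equiv.permCongrHom, Equiv.permCongr_apply] at this
      exact this
    · rintro ⟨g, r, rfl, rfl⟩
      refine ⟨e (g, r), Prod.ext rfl ?_⟩
      simp [A, Equiv.permCongrHom, Equiv.permCongr_apply]
      rfl
  unfold IsHamelFunction
  rw [hg]
  exact ⟨hS.2.2 w hw, hspan w hw⟩

lemma not_hamel_id : ¬ IsHamelFunction ⇑(1 : Equiv.Perm ℝ) := by
  rintro ⟨h, -⟩
  exact h.ne_zero ⟨(0, 0), 0, rfl⟩ rfl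

theorem stmt_0 :
    ∃ (I : Type) (_ : Cardinal.mk I = Cardinal.continuum) (f : I → Equiv.Perm ℝ),
      Function.Injective (FreeGroup.lift f) ∧
        ∀ w : FreeGroup I, w ≠ 1 → IsHamelFunction ⇑(FreeGroup.lift f w) := by
  obtain ⟨F, hF⟩ := main_group (G := FreeGroup ℝ)
    (by rw [mk_freeGroup, mk_real]; simp [aleph0_le_continuum])
    (by
      intro g hg h
      apply hg
      have : g ^ 2 = 1 := by rw [pow_two]; exact mul_eq_one_iff_eq_inv.2 h
      exact (pow_eq_one_iff_left (two_ne_zero)).1 this)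
  have hl : FreeGroup.lift (fun i => F (FreeGroup.of i)) = F := by
    ext i : 1
    simp
  refine ⟨ℝ, mk_real, fun i => F (FreeGroup.of i), ?_, ?_⟩
  · rw [hl, injective_iff_map_eq_one]
    intro w hw
    by_contra h
    have := hF w h
    rw [hw] at this
    exact not_hamel_id this
  · rw [hl]
    exact hF
end

section
/- Every constant function g : ℝ → ℝ can be written as a composition g = h ∘ f of two Hamel functions h, f : ℝ → ℝ. -/
open Cardinal in
theorem aux_card {ι : Type} (B : Module.Basis ι ℚ ℝ) (S : Set ℝ) (j : ι → S)
    (hj : Function.Injective j) : Nonempty (S ≃ ι) := by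
  have h1 : #ι = 𝔠 := by
    have h := B.mk_eq_rank
    simp only [Cardinal.lift_id] at h
    rw [h]
    exact Real.rank_rat_real
  have h2 : #ι ≤ #S := Cardinal.mk_le_of_injective hj
  have h3 : #S ≤ #ℝ := Cardinal.mk_set_le S
  rw [Cardinal.mk_real, ← h1] at h3
  exact Cardinal.eq.1 (le_antisymm h3 h2)

theorem aux_main {ι : Type} (B : Module.Basis ι ℚ ℝ) (f : ℝ → ℝ)
    (π σ : ℝ × ℝ →ₗ[ℚ] ℝ) (hinj : ∀ w, π w = 0 → σ w = 0 → w = 0)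
    (S T : Set ℝ) (hST : S ∪ T = Set.univ)
    (e₁ : S ≃ ι) (e₂ : T ≃ ι)
    (h0 : ∀ x : S, π ((x : ℝ), f x) = 0)
    (h1 : ∀ x : S, σ ((x : ℝ), f x) = B (e₁ x))
    (h2 : ∀ x : T, π ((x : ℝ), f x) = B (e₂ x)) : IsHamelFunction f := by
  set v : ℝ → ℝ × ℝ := fun x => (x, f x) with hv
  have hσ : (σ ∘ fun x : S => v x) = B ∘ e₁ := funext h1
  have hπ : (π ∘ fun x : T => v x) = B ∘ e₂ := funext h2
  have lσ : LinearIndependent ℚ (σ ∘ fun x : S => v x) := by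
    rw [hσ]; exact B.linearIndependent.comp _ e₁.injective
  have lπ : LinearIndependent ℚ (π ∘ fun x : T => v x) := by
    rw [hπ]; exact B.linearIndependent.comp _ e₂.injective
  have rS : Set.range (fun x : S => v x) = v '' S := by
    rw [Set.image_eq_range]
  have rT : Set.range (fun x : T => v x) = v '' T := by
    rw [Set.image_eq_range]
  have kS : Submodule.span ℚ (v '' S) ≤ LinearMap.ker π := by
    rw [Submodule.span_le]
    rintro _ ⟨x, hx, rfl⟩
    exact h0 ⟨x, hx⟩
  have hdis : Disjoint (Submodule.span ℚ (v '' S)) (Submodule.span ℚ (v '' T)) := by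
    have := Submodule.range_ker_disjoint lπ
    rw [rT] at this
    exact (this.mono_right kS).symm
  have iS : LinearIndepOn ℚ v S := LinearIndependent.of_comp σ lσ
  have iT : LinearIndepOn ℚ v T := LinearIndependent.of_comp π lπ
  have iU := iS.union iT hdis
  rw [hST] at iU
  have iv : LinearIndependent ℚ v := linearIndepOn_univ_iff.1 iU
  refine ⟨iv.linearIndepOn_id, ?_⟩
  have gS : v '' S ⊆ graph f := by rintro _ ⟨x, _, rfl⟩; exact ⟨x, rfl⟩
  have gT : v '' T ⊆ graph f := by rintro _ ⟨x, _, rfl⟩; exact ⟨x, rfl⟩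
  have mS : (Submodule.span ℚ (v '' S)).map σ = ⊤ := by
    rw [← rS, Submodule.map_span, ← Set.range_comp, hσ, e₁.surjective.range_comp, B.span_eq]
  have mT : (Submodule.span ℚ (v '' T)).map π = ⊤ := by
    rw [← rT, Submodule.map_span, ← Set.range_comp, hπ, e₂.surjective.range_comp, B.span_eq]
  rw [eq_top_iff]
  intro w _
  obtain ⟨t, ht, htw⟩ : π w ∈ (Submodule.span ℚ (v '' T)).map π := by rw [mT]; trivial
  obtain ⟨s, hs, hsw⟩ : σ (w - t) ∈ (Submodule.span ℚ (v '' S)).map σ := by rw [mS]; trivial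
  have hs0 : π s = 0 := kS hs
  have key : w - t - s = 0 := by
    apply hinj
    · rw [map_sub, map_sub, htw, hs0]; simp
    · rw [map_sub, hsw]; simp
  have : w = t + s := by rw [sub_sub, sub_eq_zero] at key; exact key
  rw [this]
  exact add_mem (Submodule.span_mono gT ht) (Submodule.span_mono gS hs)

theorem aux_two {ι : Type} (B : Module.Basis ι ℚ ℝ) (i j : ι) : B i ≠ 2 * B j := by
  classical
  intro h
  have h' : B i = (2 : ℚ) • B j := by rw [h, Rat.smul_def]; norm_num
  have h2 := congrArg (fun x => B.repr x i) h'
  simp only [map_smul, Module.Basis.repr_self, Finsupp.smul_apply, smul_eq_mul] at h2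
  rw [Finsupp.single_eq_same] at h2
  by_cases hij : j = i
  · subst hij; rw [Finsupp.single_eq_same] at h2; norm_num at h2
  · rw [Finsupp.single_apply, if_neg hij] at h2; norm_num at h2

theorem stmt_2 (g : ℝ → ℝ) (c : ℝ) (hg : ∀ x, g x = c) :
    ∃ h f : ℝ → ℝ, IsHamelFunction h ∧ IsHamelFunction f ∧ g = h ∘ f := by
  classical
  let B := Module.Basis.ofVectorSpace ℚ ℝ
  have hBi : Function.Injective B := B.injective
  have h2i : Function.Injective (fun i => 2 * B i) := fun i j hij => hBi (by simpa using hij)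
  obtain ⟨e⟩ := aux_card B (Set.range B)ᶜ
    (fun i => ⟨2 * B i, by rintro ⟨j, hj⟩; exact aux_two B j i hj⟩)
    (fun i j hij => h2i (congrArg Subtype.val hij))
  obtain ⟨d⟩ := aux_card B (Set.range (fun i => 2 * B i))ᶜ
    (fun i => ⟨B i, by rintro ⟨j, hj⟩; exact aux_two B i j hj.symm⟩)
    (fun i j hij => hBi (congrArg Subtype.val hij))
  let φ : ℝ →ₗ[ℚ] ℝ := B.constr ℚ (fun _ => c)
  let ψ : ℝ →ₗ[ℚ] ℝ := B.constr ℚ (fun i => ((d.symm i : _) : ℝ))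
  let k := Equiv.ofInjective _ h2i
  let h : ℝ → ℝ := fun x => if hx : x ∈ (Set.range B)ᶜ then φ x + B (e ⟨x, hx⟩) else c
  let f : ℝ → ℝ := fun x => if hx : x ∈ (Set.range (fun i => 2 * B i))ᶜ then B (d ⟨x, hx⟩)
    else B (d ⟨B (k.symm ⟨x, not_not.1 hx⟩),
      by rintro ⟨j, hj⟩; exact aux_two B _ j hj.symm⟩)
  have hB : ∀ i, h (B i) = c := fun i => dif_neg (fun hx => hx ⟨i, rfl⟩)
  refine ⟨h, f, ?_, ?_, ?_⟩
  · refine aux_main B h (LinearMap.snd ℚ ℝ ℝ - φ ∘ₗ LinearMap.fst ℚ ℝ ℝ) (LinearMap.fst ℚ ℝ ℝ)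
      ?_ (Set.range B) (Set.range B)ᶜ (Set.union_compl_self _)
      (Equiv.ofInjective _ hBi).symm e ?_ ?_ ?_
    · rintro ⟨x, y⟩ h1 h2
      simp at h1 h2
      subst h2
      simpa using h1
    · rintro ⟨_, i, rfl⟩
      simp [hB, φ, Module.Basis.constr_basis]
    · rintro ⟨_, i, rfl⟩
      simp
    · rintro ⟨x, hx⟩
      have : h x = φ x + B (e ⟨x, hx⟩) := dif_pos hx
      simp [this]
  · refine aux_main B f (LinearMap.fst ℚ ℝ ℝ - ψ ∘ₗ LinearMap.snd ℚ ℝ ℝ) (LinearMap.snd ℚ ℝ ℝ)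
      ?_ (Set.range (fun i => 2 * B i))ᶜ (Set.range (fun i => 2 * B i))
      (Set.compl_union_self _) d k.symm ?_ ?_ ?_
    · rintro ⟨x, y⟩ h1 h2
      simp at h1 h2
      subst h2
      simpa using h1
    · rintro ⟨x, hx⟩
      have : f x = B (d ⟨x, hx⟩) := dif_pos hx
      simp [this, ψ, Module.Basis.constr_basis]
    · rintro ⟨x, hx⟩
      exact dif_pos hx
    · rintro ⟨x, hx⟩
      have h1 : f x = B (d ⟨B (k.symm ⟨x, hx⟩),
        by rintro ⟨j, hj⟩; exact aux_two B _ j hj.symm⟩) := dif_neg (not_not.2 hx)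
      have h2 : 2 * B (k.symm ⟨x, hx⟩) = x :=
        congrArg Subtype.val (k.apply_symm_apply ⟨x, hx⟩)
      simp only [LinearMap.sub_apply, LinearMap.comp_apply, LinearMap.fst_apply,
        LinearMap.snd_apply, h1, ψ, Module.Basis.constr_basis, Equiv.symm_apply_apply]
      linarith
  · funext x
    rw [hg]
    symm
    by_cases hx : x ∈ (Set.range (fun i => 2 * B i))ᶜ
    · have : f x = B (d ⟨x, hx⟩) := dif_pos hx
      rw [Function.comp_apply, this, hB]
    · have : f x = B (d ⟨B (k.symm ⟨x, not_not.1 hx⟩),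
        by rintro ⟨j, hj⟩; exact aux_two B _ j hj.symm⟩) := dif_neg hx
      rw [Function.comp_apply, this, hB]
end

section
/- Let g : ℝ → ℝ be a function and suppose there exists a Hamel basis H of ℝ (a basis of ℝ as a vector space over ℚ) such that the restriction of g to H ∪ {0} is constant. Then g can be written as a composition g = h ∘ f of two Hamel functions h, f : ℝ → ℝ. -/
lemma hamel_aux {H : Set ℝ} (b : Module.Basis H ℚ ℝ) (E : (ℝ × ℝ) ≃ₗ[ℚ] (ℝ × ℝ))
    (σ : H ⊕ H ≃ ℝ) (f : ℝ → ℝ)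
    (hE : ∀ s, E ((b.prod b) s) = (σ s, f (σ s))) : IsHamelFunction f := by
  let B : Module.Basis ℝ ℚ (ℝ × ℝ) := ((b.prod b).map E).reindex σ
  have hB : (B : ℝ → ℝ × ℝ) = fun x => (x, f x) := by
    funext x
    simp only [B, Module.Basis.reindex_apply, Module.Basis.map_apply]
    rw [hE]; simp
  have h1 := B.linearIndependent
  have h2 := B.span_eq
  rw [hB] at h1 h2
  exact ⟨h1.linearIndepOn_id, h2⟩

lemma card_aux {H : Set ℝ} (b : Module.Basis H ℚ ℝ) (hb : ∀ i, b i = (i : ℝ)) :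
    Nonempty (H ≃ (Hᶜ : Set ℝ)) := by
  have hH : Cardinal.mk H = Cardinal.continuum := by
    rw [b.mk_eq_rank'']; exact Real.rank_rat_real
  rw [← Cardinal.eq, hH]
  apply le_antisymm
  · rw [← hH]
    refine Cardinal.mk_le_of_injective (f := fun x : H => (⟨-(x : ℝ), fun hx => ?_⟩ : (Hᶜ : Set ℝ))) ?_
    · have h1 : b ⟨-(x : ℝ), hx⟩ = - b x := by simp [hb]
      have h2 := congrArg (fun v => b.repr v ⟨-(x : ℝ), hx⟩) h1
      simp only [map_neg, Module.Basis.repr_self, Finsupp.neg_apply, Finsupp.single_apply] at h2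
      split_ifs at h2 <;> norm_num at h2
    · intro x y h
      simpa [Subtype.ext_iff] using h
  · rw [← Cardinal.mk_real]; exact Cardinal.mk_set_le _

theorem stmt_3 (g : ℝ → ℝ) (H : Set ℝ)
    (hind : LinearIndependent ℚ ((↑) : H → ℝ))
    (hspan : Submodule.span ℚ H = ⊤)
    (hconst : ∃ c : ℝ, ∀ x ∈ H ∪ {0}, g x = c) :
    ∃ h f : ℝ → ℝ, IsHamelFunction h ∧ IsHamelFunction f ∧ g = h ∘ f := by
  classical
  obtain ⟨c, hc⟩ := hconst
  let b : Module.Basis H ℚ ℝ := Module.Basis.mk hind (by simp [hspan])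
  have hb : ∀ i, b i = (i : ℝ) := fun i => by simp [b]
  obtain ⟨e⟩ := card_aux b hb
  have h0 : (0 : ℝ) ∈ Hᶜ := fun h => hind.ne_zero ⟨0, h⟩ rfl
  let β : H := e.symm ⟨0, h0⟩
  have hβ : ((e β : (Hᶜ : Set ℝ)) : ℝ) = 0 := by simp [β]
  let σ : H ⊕ H ≃ ℝ := ((Equiv.refl H).sumCongr e).trans (Equiv.Set.sumCompl H)
  have σl : ∀ i, σ (Sum.inl i) = i := fun i => by simp [σ]
  have σr : ∀ i, σ (Sum.inr i) = e i := fun i => by simp [σ]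
  have τl : ∀ i : H, σ.symm (i : ℝ) = Sum.inl i := fun i => by
    rw [← σl i, Equiv.symm_apply_apply]
  have τr : ∀ i : H, σ.symm (e i : ℝ) = Sum.inr i := fun i => by
    rw [← σr i, Equiv.symm_apply_apply]
  let M : ℝ →ₗ[ℚ] ℝ := b.constr ℚ (fun j => (e j : ℝ))
  have hM : ∀ j : H, M j = e j := fun j => by
    rw [← hb j]; simp [M, Module.Basis.constr_basis]
  let L : ℝ →ₗ[ℚ] ℝ := b.constr ℚ (fun j => g (e j))
  have hL : ∀ j : H, L j = g (e j) := fun j => by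
    rw [← hb j]; simp [L, Module.Basis.constr_basis]
  let K : ℝ →ₗ[ℚ] ℝ := b.constr ℚ (fun _ => (β : ℝ))
  have hK : ∀ j : H, K j = β := fun j => by
    rw [← hb j]; simp [K, Module.Basis.constr_basis]
  let S (L : ℝ →ₗ[ℚ] ℝ) : (ℝ × ℝ) ≃ₗ[ℚ] (ℝ × ℝ) := LinearEquiv.ofLinearMap
    ((LinearMap.fst ℚ ℝ ℝ).prod (LinearMap.snd ℚ ℝ ℝ + L ∘ₗ LinearMap.fst ℚ ℝ ℝ))
    ((LinearMap.fst ℚ ℝ ℝ).prod (LinearMap.snd ℚ ℝ ℝ - L ∘ₗ LinearMap.fst ℚ ℝ ℝ))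
    (LinearMap.ext fun x => by simp) (LinearMap.ext fun x => by simp)
  let T : (ℝ × ℝ) ≃ₗ[ℚ] (ℝ × ℝ) := LinearEquiv.ofLinearMap
    ((LinearMap.fst ℚ ℝ ℝ + M ∘ₗ LinearMap.snd ℚ ℝ ℝ).prod (LinearMap.snd ℚ ℝ ℝ))
    ((LinearMap.fst ℚ ℝ ℝ - M ∘ₗ LinearMap.snd ℚ ℝ ℝ).prod (LinearMap.snd ℚ ℝ ℝ))
    (LinearMap.ext fun x => by simp) (LinearMap.ext fun x => by simp)
  have hS : ∀ L x y, S L (x, y) = (x, y + L x) := fun L x y => by simp [S]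
  have hT : ∀ x y, T (x, y) = (x + M y, y) := fun x y => by simp [T]
  have bl : ∀ i, (b.prod b) (Sum.inl i) = ((i : ℝ), (0 : ℝ)) := fun i => by
    ext <;> simp [hb]
  have br : ∀ i, (b.prod b) (Sum.inr i) = ((0 : ℝ), (i : ℝ)) := fun i => by
    ext <;> simp [hb]
  let h : ℝ → ℝ := fun x => Sum.elim (fun i : H => L i) (fun j : H => j + L (e j)) (σ.symm x)
  let f : ℝ → ℝ := fun x => Sum.elim (fun _ : H => (β : ℝ)) (fun j : H => (j : ℝ)) (σ.symm x)
  have hh : ∀ i : H, h i = L i := fun i => by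
    simp only [h]; rw [← σl i, Equiv.symm_apply_apply]; simp [σl]
  refine ⟨h, f, hamel_aux b (T.trans (S L)) σ h ?_, hamel_aux b ((S K).trans T) σ f ?_, ?_⟩
  · rintro (i | j)
    · rw [bl, LinearEquiv.trans_apply, hT, hS]; simp [h, σl, τl]
    · rw [br, LinearEquiv.trans_apply, hT, hS]; simp [h, σr, τr, hM]
  · rintro (i | j)
    · rw [bl, LinearEquiv.trans_apply, hS, hT]; simp [f, σl, τl, hM, hK, hβ]
    · rw [br, LinearEquiv.trans_apply, hS, hT]; simp [f, σr, τr, hM]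
  · funext x
    obtain ⟨s, rfl⟩ := σ.surjective x
    rcases s with i | j
    · have : f (σ (Sum.inl i)) = β := by simp [f]
      rw [Function.comp_apply, this, hh, hL, hβ, σl, hc i (Or.inl i.2), hc 0 (Or.inr rfl)]
    · have : f (σ (Sum.inr j)) = j := by simp [f]
      rw [Function.comp_apply, this, hh, hL, σr]
end

section
/- There exists a bijection f : ℝ → ℝ which is a Hamel function, i.e., whose graph is a basis of ℝ² as a vector space over ℚ. -/
open Cardinal in
theorem span_small {G : Set (ℝ × ℝ)} (hG : #G < continuum) :
    #(Submodule.span ℚ G) < continuum := by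
  have h1 : #(Submodule.span ℚ G) ≤ #(Algebra.adjoin ℚ G) :=
    Cardinal.mk_le_mk_of_subset (Algebra.span_le_adjoin ℚ G)
  refine h1.trans_lt ((Algebra.cardinalMk_adjoin_le ℚ G).trans_lt ?_)
  simp only [sup_lt_iff]
  refine ⟨⟨?_, hG⟩, aleph0_lt_continuum⟩
  simpa using aleph0_lt_continuum

open Cardinal in
theorem exists_notMem_image {K : Set (ℝ × ℝ)} (hK : #K < continuum) (g : ℝ × ℝ → ℝ) :
    ∃ y, ∀ p ∈ K, g p ≠ y := by
  by_contra! h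
  have h2 : g '' K = Set.univ := by
    ext y; simpa using h y
  have h3 : #(g '' K) ≤ #K := mk_image_le
  rw [h2, mk_univ, mk_real] at h3
  exact absurd hK (not_lt.2 h3)

def Good (G : Set (ℝ × ℝ)) : Prop :=
  LinearIndepOn ℚ id G ∧ Set.InjOn Prod.fst G ∧ Set.InjOn Prod.snd G

theorem Good.ins {G : Set (ℝ × ℝ)} (h : Good G) {p : ℝ × ℝ} (hp : p ∉ Submodule.span ℚ G)
    (h1 : ∀ q ∈ G, q.1 ≠ p.1) (h2 : ∀ q ∈ G, q.2 ≠ p.2) : Good (insert p G) := by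
  have hpG : p ∉ G := fun h => hp (Submodule.subset_span h)
  refine ⟨h.1.id_insert hp, ?_, ?_⟩
  · rw [Set.injOn_insert hpG]
    refine ⟨h.2.1, ?_⟩
    rintro ⟨q, hq, e⟩
    exact h1 q hq e
  · rw [Set.injOn_insert hpG]
    refine ⟨h.2.2, ?_⟩
    rintro ⟨q, hq, e⟩
    exact h2 q hq e

open Cardinal in
theorem Good.step1 {G : Set (ℝ × ℝ)} (h : Good G) (hG : #G < continuum) (x : ℝ) :
    ∃ F : Set (ℝ × ℝ), F.Finite ∧ Good (G ∪ F) ∧ ∃ q ∈ G ∪ F, q.1 = x := by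
  by_cases hx : ∃ q ∈ G, q.1 = x
  · exact ⟨∅, Set.finite_empty, by simpa using h, by simpa using hx⟩
  push Not at hx
  obtain ⟨y, hy⟩ := exists_notMem_image (span_small hG) Prod.snd
  refine ⟨{(x, y)}, Set.finite_singleton _, ?_, (x, y), by simp, rfl⟩
  rw [Set.union_singleton]
  exact h.ins (fun hh => hy _ hh rfl) hx (fun q hq => hy q (Submodule.subset_span hq))

open Cardinal in
theorem Good.step2 {G : Set (ℝ × ℝ)} (h : Good G) (hG : #G < continuum) (x : ℝ) :
    ∃ F : Set (ℝ × ℝ), F.Finite ∧ Good (G ∪ F) ∧ ∃ q ∈ G ∪ F, q.2 = x := by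
  by_cases hx : ∃ q ∈ G, q.2 = x
  · exact ⟨∅, Set.finite_empty, by simpa using h, by simpa using hx⟩
  push Not at hx
  obtain ⟨y, hy⟩ := exists_notMem_image (span_small hG) Prod.fst
  refine ⟨{(y, x)}, Set.finite_singleton _, ?_, (y, x), by simp, rfl⟩
  rw [Set.union_singleton]
  exact h.ins (fun hh => hy _ hh rfl) (fun q hq => hy q (Submodule.subset_span hq)) hx

open Cardinal in
theorem union_small {G F : Set (ℝ × ℝ)} (hG : #G < continuum) (hF : F.Finite) :
    #(G ∪ F : Set (ℝ × ℝ)) < continuum :=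
  (mk_union_le G F).trans_lt
    (add_lt_of_lt aleph0_le_continuum hG (hF.lt_aleph0.trans aleph0_lt_continuum))

open Cardinal in
theorem Good.step3 {G : Set (ℝ × ℝ)} (h : Good G) (hG : #G < continuum) (v : ℝ × ℝ) :
    ∃ F : Set (ℝ × ℝ), F.Finite ∧ Good (G ∪ F) ∧ v ∈ Submodule.span ℚ (G ∪ F) := by
  by_cases hv : v ∈ Submodule.span ℚ G
  · exact ⟨∅, Set.finite_empty, by simpa using h, by simpa using hv⟩
  have hK := span_small (union_small hG (Set.finite_singleton v))
  rw [Set.union_singleton] at hK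
  obtain ⟨x, hx⟩ := exists_notMem_image hK Prod.fst
  obtain ⟨y, hy⟩ := exists_notMem_image hK Prod.snd
  set K := Submodule.span ℚ (insert v G) with hKdef
  have hvK : v ∈ K := Submodule.subset_span (by simp)
  have hGK : ∀ q ∈ G, q ∈ K := fun q hq => Submodule.subset_span (by simp [hq])
  have hpK : (x, y) ∉ K := fun hh => hx _ hh rfl
  have hGKs : Submodule.span ℚ G ≤ K := Submodule.span_mono (Set.subset_insert _ _)
  have g1 : Good (insert (x, y) G) := h.ins (fun hh => hpK (hGKs hh))
    (fun q hq => hx q (hGK q hq)) (fun q hq => hy q (hGK q hq))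
  have hhalf : ((1 / 2 : ℚ) • v) ∈ K := K.smul_mem _ hvK
  have g2 : Good (insert (v - (x, y)) (insert (x, y) G)) := by
    refine g1.ins ?_ ?_ ?_
    · intro hh
      have hv2 : v ∈ Submodule.span ℚ (insert (x, y) G) := by
        have := Submodule.add_mem _ hh
          (Submodule.subset_span (Set.mem_insert (x, y) G) : (x, y) ∈ Submodule.span ℚ _)
        simpa using this
      exact hpK (mem_span_insert_exchange hv2 hv)
    · rintro q (rfl | hq) e
      · refine hx _ hhalf ?_
        simp [Rat.smul_def] at e ⊢
        linarith
      · refine hx _ (K.sub_mem hvK (hGK q hq)) ?_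
        simp at e ⊢
        linarith
    · rintro q (rfl | hq) e
      · refine hy _ hhalf ?_
        simp [Rat.smul_def] at e ⊢
        linarith
      · refine hy _ (K.sub_mem hvK (hGK q hq)) ?_
        simp at e ⊢
        linarith
  have e : G ∪ {v - (x, y), (x, y)} = insert (v - (x, y)) (insert (x, y) G) := by
    ext q; simp
  refine ⟨{v - (x, y), (x, y)}, by simp, by rwa [e], ?_⟩
  have := Submodule.add_mem (Submodule.span ℚ (G ∪ {v - (x, y), (x, y)}))
    (Submodule.subset_span (by simp : v - (x, y) ∈ _))
    (Submodule.subset_span (by simp : (x, y) ∈ _))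
  simpa using this

def Done (v : ℝ × ℝ) (G : Set (ℝ × ℝ)) : Prop :=
  (∃ q ∈ G, q.1 = v.1) ∧ (∃ q ∈ G, q.2 = v.2) ∧ v ∈ Submodule.span ℚ G

theorem Done.mono {v : ℝ × ℝ} {G H : Set (ℝ × ℝ)} (h : Done v G) (hGH : G ⊆ H) : Done v H := by
  obtain ⟨⟨q, hq, e⟩, ⟨r, hr, e'⟩, h3⟩ := h
  exact ⟨⟨q, hGH hq, e⟩, ⟨r, hGH hr, e'⟩, Submodule.span_mono hGH h3⟩

open Cardinal in
theorem Good.step {G : Set (ℝ × ℝ)} (h : Good G) (hG : #G < continuum) (v : ℝ × ℝ) :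
    ∃ F : Set (ℝ × ℝ), F.Finite ∧ Good (G ∪ F) ∧ Done v (G ∪ F) := by
  obtain ⟨F1, f1, g1, q1, m1, e1⟩ := h.step1 hG v.1
  have c1 := union_small hG f1
  obtain ⟨F2, f2, g2, q2, m2, e2⟩ := g1.step2 c1 v.2
  have c2 := union_small c1 f2
  obtain ⟨F3, f3, g3, m3⟩ := g2.step3 c2 v
  have e : G ∪ (F1 ∪ F2 ∪ F3) = G ∪ F1 ∪ F2 ∪ F3 := by simp only [Set.union_assoc]
  refine ⟨F1 ∪ F2 ∪ F3, (f1.union f2).union f3, by rwa [e], ?_⟩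
  rw [e]
  exact ⟨⟨q1, Or.inl (Or.inl m1), e1⟩, ⟨q2, Or.inl m2, e2⟩, m3⟩

theorem Good.iUnion {ι : Type*} {A : ι → Set (ℝ × ℝ)} (hA : Directed (· ⊆ ·) A)
    (h : ∀ i, Good (A i)) : Good (⋃ i, A i) := by
  refine ⟨linearIndepOn_iUnion_of_directed hA fun i => (h i).1, ?_, ?_⟩
  · intro p hp q hq e
    obtain ⟨i, hi⟩ := Set.mem_iUnion.1 hp
    obtain ⟨j, hj⟩ := Set.mem_iUnion.1 hq
    obtain ⟨k, hik, hjk⟩ := hA i j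
    exact (h k).2.1 (hik hi) (hjk hj) e
  · intro p hp q hq e
    obtain ⟨i, hi⟩ := Set.mem_iUnion.1 hp
    obtain ⟨j, hj⟩ := Set.mem_iUnion.1 hq
    obtain ⟨k, hik, hjk⟩ := hA i j
    exact (h k).2.2 (hik hi) (hjk hj) e

open Cardinal in
theorem exists_good : ∃ G, Good G ∧ ∀ v, Done v G := by
  classical
  have hT : #(continuum.{0}.ord.ToType) = #(ℝ × ℝ) := by
    simp [mk_real]
  obtain ⟨e⟩ := Cardinal.eq.1 hT
  have hE : ∀ (G : Set (ℝ × ℝ)) (v : ℝ × ℝ), ∃ F : Set (ℝ × ℝ), F.Finite ∧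
      (Good G → #G < continuum → Good (G ∪ F) ∧ Done v (G ∪ F)) := by
    intro G v
    by_cases hh : Good G ∧ #G < continuum
    · obtain ⟨F, a, b⟩ := hh.1.step hh.2 v
      exact ⟨F, a, fun _ _ => b⟩
    · exact ⟨∅, Set.finite_empty, fun a b => absurd ⟨a, b⟩ hh⟩
  choose E hEf hEg using hE
  obtain ⟨S, hS⟩ : ∃ S : continuum.{0}.ord.ToType → Set (ℝ × ℝ),
      ∀ t, S t = E (⋃ u : Set.Iio t, S u) (e t) := by
    refine ⟨(wellFounded_lt (α := continuum.{0}.ord.ToType)).fix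
      (fun t ih => E (⋃ u : Set.Iio t, ih u.1 u.2) (e t)), fun t => ?_⟩
    rw [WellFounded.fix_eq]
  set A : continuum.{0}.ord.ToType → Set (ℝ × ℝ) := fun t => ⋃ u : Set.Iio t, S u with hA
  have hSA : ∀ t, S t = E (A t) (e t) := hS
  have hfin : ∀ t, (S t).Finite := fun t => by rw [hSA]; exact hEf _ _
  have hcard : ∀ t, #(A t) < continuum := by
    intro t
    have hI : #(Set.Iio t) < continuum := by
      simpa using mk_Iio_toType_ord_lt t
    refine (mk_iUnion_le _).trans_lt (mul_lt_of_lt aleph0_le_continuum hI ?_)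
    refine lt_of_le_of_lt ?_ aleph0_lt_continuum
    exact ciSup_le' fun i => (hfin i.1).lt_aleph0.le
  have hsub : ∀ u t, u < t → A u ∪ S u ⊆ A t := by
    intro u t hut p hp
    rcases hp with hp | hp
    · obtain ⟨w, hw⟩ := Set.mem_iUnion.1 hp
      exact Set.mem_iUnion.2 ⟨⟨w.1, lt_trans w.2 hut⟩, hw⟩
    · exact Set.mem_iUnion.2 ⟨⟨u, hut⟩, hp⟩
  have hmono : Monotone fun u => A u ∪ S u := by
    intro u t hut
    rcases hut.eq_or_lt with rfl | hlt
    · exact le_rfl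
    · exact (hsub u t hlt).trans Set.subset_union_left
  have hgood : ∀ t, Good (A t) := by
    intro t
    induction t using WellFoundedLT.induction with
    | ind t ih =>
      have e1 : A t = ⋃ u : Set.Iio t, (A u ∪ S u) := by
        apply Set.Subset.antisymm
        · exact Set.iUnion_mono fun u => Set.subset_union_right
        · exact Set.iUnion_subset fun u => hsub u.1 t u.2
      rw [e1]
      refine Good.iUnion ?_ ?_
      · exact Monotone.directed_le (fun a b hab => hmono hab)
      · intro u
        rw [hSA]
        exact (hEg _ _ (ih u.1 u.2) (hcard _)).1
  have hfinal : ∀ t, Good (A t ∪ S t) ∧ Done (e t) (A t ∪ S t) := by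
    intro t
    rw [hSA]
    exact hEg _ _ (hgood t) (hcard t)
  refine ⟨⋃ t, (A t ∪ S t), Good.iUnion hmono.directed_le fun t => (hfinal t).1, fun v => ?_⟩
  have := (hfinal (e.symm v)).2
  rw [e.apply_symm_apply] at this
  exact this.mono (Set.subset_iUnion (fun t => A t ∪ S t) _)

theorem stmt_6 : ∃ f : ℝ → ℝ, Function.Bijective f ∧ IsHamelFunction f := by
  obtain ⟨G, ⟨hl, h1, h2⟩, hd⟩ := exists_good
  have hx : ∀ x : ℝ, ∃ y, (x, y) ∈ G := by
    intro x
    obtain ⟨⟨a, b⟩, hq, rfl⟩ := (hd (x, 0)).1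
    exact ⟨b, hq⟩
  choose f hf using hx
  have hg : graph f = G := by
    ext ⟨a, b⟩
    constructor
    · rintro ⟨x, hx⟩
      rw [← hx]
      exact hf x
    · intro hab
      exact ⟨a, h1 (hf a) hab rfl⟩
  refine ⟨f, ⟨?_, ?_⟩, ?_, ?_⟩
  · intro a b hab
    exact congrArg Prod.fst (h2 (hf a) (hf b) hab)
  · intro y
    obtain ⟨⟨a, b⟩, hq, rfl⟩ := (hd (0, y)).2.1
    exact ⟨a, congrArg Prod.snd (h1 (hf a) hq rfl)⟩
  · rw [hg]
    exact hl
  · rw [hg, eq_top_iff]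
    exact fun v _ => (hd v).2.2
end

section
/- Every function g : ℝ → ℝ can be written as a composition g = f₃ ∘ f₂ ∘ f₁ of three Hamel functions f₁, f₂, f₃ : ℝ → ℝ. -/
open Set in
theorem hamel_aux_s8 {ι : Type} (u : Module.Basis ι ℚ ℝ) (L : ℝ →ₗ[ℚ] ℝ)
    (b : Module.Basis (↥(range u)ᶜ) ℚ ℝ) (f : ℝ → ℝ) (h1 : ∀ i, f (u i) = L (u i))
    (h2 : ∀ x : ↥(range u)ᶜ, f x = L x + b x) : IsHamelFunction f := by
  classical
  let M : ℝ →ₗ[ℚ] ℝ := b.constr ℚ (fun x : ↥(range u)ᶜ => (x : ℝ))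
  have hM : ∀ x, M (b x) = x := fun x => by simp [M]
  let E : (ℝ × ℝ) ≃ₗ[ℚ] (ℝ × ℝ) :=
    { toFun := fun p => (p.1 + M p.2, p.2 + L (p.1 + M p.2))
      invFun := fun p => (p.1 - M (p.2 - L p.1), p.2 - L p.1)
      map_add' := fun p q => by
        ext
        · simp; ring
        · simp; ring
      map_smul' := fun c p => by
        ext
        · simp [smul_add]
        · simp [smul_add]
      left_inv := fun p => by
        ext
        · simp
        · simp
      right_inv := fun p => by
        ext
        · simp
        · simp }
  have hE : ∀ p, E p = (p.1 + M p.2, p.2 + L (p.1 + M p.2)) := fun p => rfl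
  let B := (u.prod b).map E
  have hl : ∀ i, B (Sum.inl i) = (u i, f (u i)) := fun i => by
    simp [B, hE, h1]
  have hr : ∀ x, B (Sum.inr x) = ((x : ℝ), f x) := fun x => by
    simp only [B, Module.Basis.map_apply, hE, h2]
    simp [hM]
    ring
  have hrange : graph f = range B := by
    ext p
    constructor
    · rintro ⟨x, rfl⟩
      by_cases hx : x ∈ range u
      · obtain ⟨i, rfl⟩ := hx
        exact ⟨Sum.inl i, hl i⟩
      · exact ⟨Sum.inr ⟨x, hx⟩, hr ⟨x, hx⟩⟩
    · rintro ⟨i | x, rfl⟩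
      · exact ⟨u i, (hl i).symm⟩
      · exact ⟨x, (hr x).symm⟩
  unfold IsHamelFunction
  rw [hrange]
  exact ⟨B.linearIndependent.linearIndepOn_id, B.span_eq⟩

theorem basis_aux {ι : Type} (u : Module.Basis ι ℚ ℝ) {i j : ι} {a c : ℚ} (ha : a ≠ 0)
    (h : a • u i = c • u j) : a = c := by
  have h' := congrArg u.repr h
  simp only [map_smul, Module.Basis.repr_self, Finsupp.smul_single, smul_eq_mul, mul_one] at h'
  rcases (Finsupp.single_eq_single_iff _ _ _ _).1 h' with h | h
  · exact h.2
  · exact absurd h.1 ha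

open Set Cardinal in
theorem card_aux_s8 {ι : Type} (u : Module.Basis ι ℚ ℝ) : #ι = 𝔠 := by
  rw [u.mk_eq_rank'', Real.rank_rat_real]

open Set Cardinal in
theorem compl_aux {ι : Type} (u : Module.Basis ι ℚ ℝ) :
    Nonempty (↥(range u)ᶜ ≃ ι) := by
  rw [← Cardinal.eq]
  have h := card_aux_s8 u
  apply le_antisymm
  · rw [h, ← Cardinal.mk_real]
    exact Cardinal.mk_set_le _
  · refine Cardinal.mk_le_of_injective (f := fun i => ⟨(2 : ℚ) • u i, ?_⟩) ?_
    · rintro ⟨j, hj⟩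
      have := basis_aux u (a := 2) (c := 1) (i := i) (j := j) (by norm_num) (by rw [one_smul, hj])
      norm_num at this
    · intro i j hij
      have h' : (2 : ℚ) • u i = (2 : ℚ) • u j := congrArg Subtype.val hij
      exact u.injective (smul_right_injective ℝ (by norm_num : (2 : ℚ) ≠ 0) h')

open Set Cardinal in
theorem first_aux : ∃ (κ : Type) (v : Module.Basis κ ℚ ℝ) (f : ℝ → ℝ), IsHamelFunction f ∧
    Function.Injective f ∧ ∀ x, f x ∉ range v := by
  classical
  obtain ⟨ι, ⟨u⟩⟩ : ∃ ι : Type, Nonempty (Module.Basis ι ℚ ℝ) :=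
    ⟨_, ⟨Module.Basis.ofVectorSpace ℚ ℝ⟩⟩
  have hc := card_aux_s8 u
  obtain ⟨s⟩ : Nonempty (ι ⊕ ι ≃ ι) := by
    rw [← Cardinal.eq]
    simp [hc]
  obtain ⟨t⟩ := compl_aux u
  -- the isomorphism of the plane with the line
  let e : (ℝ × ℝ) ≃ₗ[ℚ] ℝ := (u.prod u).equiv u s
  let shear : (ℝ × ℝ) ≃ₗ[ℚ] (ℝ × ℝ) :=
    { toFun := fun p => (p.1, p.2 + (2 : ℚ) • p.1)
      invFun := fun p => (p.1, p.2 - (2 : ℚ) • p.1)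
      map_add' := fun p q => by
        ext
        · simp
        · simp; ring
      map_smul' := fun c p => by
        ext
        · simp
        · simp [Rat.smul_def]; ring
      left_inv := fun p => by simp
      right_inv := fun p => by simp }
  have hsh : ∀ p, shear p = (p.1, p.2 + (2 : ℚ) • p.1) := fun p => rfl
  let w : Module.Basis (ι ⊕ ι) ℚ (ℝ × ℝ) := (u.prod u).map shear
  have hwl : ∀ i, w (Sum.inl i) = (u i, (2 : ℚ) • u i) := fun i => by simp [w, hsh]
  have hwr : ∀ i, w (Sum.inr i) = (0, u i) := fun i => by simp [w, hsh]
  have hu0 : ∀ i, u i ≠ 0 := fun i => u.ne_zero i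
  have hw2 : ∀ k, ∃ (i : ι) (a : ℚ), (w k).2 = a • u i ∧ (a = 1 ∨ a = 2) := by
    rintro (i | i)
    · exact ⟨i, 2, by rw [hwl], Or.inr rfl⟩
    · exact ⟨i, 1, by rw [hwr, one_smul], Or.inl rfl⟩
  have hw0 : ∀ k, (w k).2 ≠ 0 := by
    rintro (i | i)
    · rw [hwl]; simpa using hu0 i
    · rw [hwr]; exact hu0 i
  have hwinj : ∀ k l, (w k).2 = (w l).2 → k = l := by
    rintro (i | i) (j | j) h
    · rw [hwl, hwl] at h
      rw [u.injective (smul_right_injective ℝ (by norm_num : (2 : ℚ) ≠ 0) h)]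
    · rw [hwl, hwr] at h
      have := basis_aux u (a := 2) (c := 1) (i := i) (j := j) (by norm_num) (by simpa using h)
      norm_num at this
    · rw [hwl, hwr] at h
      have := basis_aux u (a := 1) (c := 2) (i := i) (j := j) (by norm_num) (by simpa using h)
      norm_num at this
    · rw [hwr, hwr] at h
      rw [u.injective h]
  let τ : (ι ⊕ ι) ≃ ↥(range u)ᶜ := s.trans t.symm
  let b : Module.Basis (↥(range u)ᶜ) ℚ ℝ := (w.map e).reindex τ
  let L : ℝ →ₗ[ℚ] ℝ := e.toLinearMap ∘ₗ LinearMap.inl ℚ ℝ ℝ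
  let F : ℝ → ℝ × ℝ := fun x => if hx : x ∈ range u then (x, 0) else (x, 0) + w (τ.symm ⟨x, hx⟩)
  have hF1 : ∀ x, x ∈ range u → F x = (x, 0) := fun x hx => by simp only [F, dif_pos hx]
  have hF2 : ∀ x (hx : x ∉ range u), F x = (x, 0) + w (τ.symm ⟨x, hx⟩) :=
    fun x hx => by simp only [F, dif_neg hx]
  have hF2' : ∀ x (hx : x ∉ range u), (F x).2 = (w (τ.symm ⟨x, hx⟩)).2 :=
    fun x hx => by rw [hF2 x hx]; simp
  let d : ι ⊕ ι → ℚˣ := Sum.elim (fun _ => Units.mk0 2 (by norm_num))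
    (fun _ => Units.mk0 3 (by norm_num))
  let v : Module.Basis (ι ⊕ ι) ℚ ℝ := ((u.prod u).unitsSMul d).map e
  have hvl : ∀ i, v (Sum.inl i) = e ((2 : ℚ) • u i, 0) := fun i => by
    simp [v, d, Module.Basis.unitsSMul_apply, Units.smul_def]
  have hvr : ∀ i, v (Sum.inr i) = e (0, (3 : ℚ) • u i) := fun i => by
    simp [v, d, Module.Basis.unitsSMul_apply, Units.smul_def]
  refine ⟨ι ⊕ ι, v, fun x => e (F x), ?_, ?_, ?_⟩
  · refine hamel_aux_s8 u L b _ ?_ ?_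
    · intro i
      simp [hF1 (u i) ⟨i, rfl⟩, L]
    · rintro ⟨x, hx⟩
      simp only [hF2 x hx, map_add]
      simp [L, b]
  · intro x y hxy
    have hxy : F x = F y := e.injective hxy
    by_cases hx : x ∈ range u <;> by_cases hy : y ∈ range u
    · rw [hF1 x hx, hF1 y hy] at hxy
      exact congrArg Prod.fst hxy
    · have := congrArg Prod.snd hxy
      rw [hF2' y hy, hF1 x hx] at this
      exact absurd this.symm (hw0 _)
    · have := congrArg Prod.snd hxy
      rw [hF2' x hx, hF1 y hy] at this
      exact absurd this (hw0 _)
    · have := congrArg Prod.snd hxy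
      rw [hF2' x hx, hF2' y hy] at this
      exact congrArg Subtype.val (τ.symm.injective (hwinj _ _ this))
  · rintro x ⟨i | i, h⟩
    · rw [hvl] at h
      have h := e.injective h
      by_cases hx : x ∈ range u
      · obtain ⟨j, rfl⟩ := id hx
        rw [hF1 _ hx] at h
        have := basis_aux u (a := 2) (c := 1) (i := i) (j := j) (by norm_num)
          (by simpa using congrArg Prod.fst h)
        norm_num at this
      · have := congrArg Prod.snd h
        rw [hF2' x hx] at this
        exact hw0 _ this.symm
    · rw [hvr] at h
      have h := congrArg Prod.snd (e.injective h)
      by_cases hx : x ∈ range u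
      · rw [hF1 _ hx] at h
        simp [hu0] at h
      · rw [hF2' x hx] at h
        obtain ⟨j, a, ha, ha'⟩ := hw2 (τ.symm ⟨x, hx⟩)
        rw [ha] at h
        have := basis_aux u (a := 3) (by norm_num) h
        rcases ha' with rfl | rfl <;> norm_num at this

open Set in
theorem stmt_8 (g : ℝ → ℝ) :
    ∃ f₁ f₂ f₃ : ℝ → ℝ, IsHamelFunction f₁ ∧ IsHamelFunction f₂ ∧
      IsHamelFunction f₃ ∧ g = f₃ ∘ f₂ ∘ f₁ := by
  classical
  obtain ⟨κ, v, f₁, hf, hinj, hout⟩ := first_aux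
  obtain ⟨σ⟩ := compl_aux v
  let b : Module.Basis (↥(range v)ᶜ) ℚ ℝ := v.reindex σ.symm
  let ρ : ℝ → κ := fun x => σ ⟨f₁ x, hout x⟩
  have hρ : Function.Injective ρ := fun x y h => hinj (congrArg Subtype.val (σ.injective h))
  let L : ℝ →ₗ[ℚ] ℝ := v.constr ℚ (fun k => g (Function.invFun ρ k))
  have key : ∀ L : ℝ →ₗ[ℚ] ℝ, ∃ f : ℝ → ℝ, IsHamelFunction f ∧ (∀ i, f (v i) = L (v i)) ∧
      ∀ x : ↥(range v)ᶜ, f x = L x + b x := by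
    intro L
    let f : ℝ → ℝ := fun x => if hx : x ∈ range v then L x else L x + b ⟨x, hx⟩
    have h1 : ∀ i, f (v i) = L (v i) := fun i => by
      have : v i ∈ range v := ⟨i, rfl⟩
      simp only [f, dif_pos this]
    have h2 : ∀ x : ↥(range v)ᶜ, f x = L x + b x := by
      rintro ⟨x, hx⟩
      have hx' : x ∉ range v := hx
      simp only [f, dif_neg hx']
    exact ⟨f, hamel_aux_s8 v L b f h1 h2, h1, h2⟩
  obtain ⟨f₂, hf2, -, h2⟩ := key 0
  obtain ⟨f₃, hf3, h3, -⟩ := key L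
  refine ⟨f₁, f₂, f₃, hf, hf2, hf3, ?_⟩
  funext x
  have e1 : f₂ (f₁ x) = v (ρ x) := by
    have := h2 ⟨f₁ x, hout x⟩
    simpa [b, ρ] using this
  simp only [Function.comp_apply, e1, h3]
  simp [L, Function.leftInverse_invFun hρ x]
end

section
/- Every function g : ℝ → ℝ whose graph {(x, g x) : x ∈ ℝ} is ℚ-linearly independent in ℝ² can be written as a composition g = h ∘ f of two Hamel functions h, f : ℝ → ℝ. -/
theorem linearIndepOn_range_aux {f : ℝ → ℝ × ℝ} (hf : Function.Injective f) :
    LinearIndependent ℚ ((↑) : Set.range f → ℝ × ℝ) ↔ LinearIndependent ℚ f := by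
  rw [← linearIndependent_equiv (Equiv.ofInjective f hf)]
  rfl

theorem hamel_iff_aux (f : ℝ → ℝ) :
    IsHamelFunction f ↔
      (∀ q : ℝ →₀ ℚ, Finsupp.linearCombination ℚ (id : ℝ → ℝ) q = 0 →
        Finsupp.linearCombination ℚ f q = 0 → q = 0) ∧
      ∀ p : Submodule ℚ (ℝ × ℝ), (∀ x, (x, f x) ∈ p) → p = ⊤ := by
  have hinj : Function.Injective (fun x : ℝ => (x, f x)) := fun x y h => (Prod.ext_iff.1 h).1
  unfold IsHamelFunction graph
  rw [linearIndepOn_range_aux hinj]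
  have key : ∀ q : ℝ →₀ ℚ, Finsupp.linearCombination ℚ (fun x : ℝ => (x, f x)) q =
      (Finsupp.linearCombination ℚ (id : ℝ → ℝ) q, Finsupp.linearCombination ℚ f q) := by
    intro q
    simp only [Finsupp.linearCombination_apply, Finsupp.sum]
    ext <;> simp [Prod.fst_sum, Prod.snd_sum]
  constructor
  · rintro ⟨h1, h2⟩
    refine ⟨fun q a b => ?_, fun p hp => ?_⟩
    · refine linearIndependent_iff.1 h1 q ?_
      rw [key, a, b]; rfl
    · rw [eq_top_iff, ← h2, Submodule.span_le]
      rintro _ ⟨x, rfl⟩; exact hp x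
  · rintro ⟨h1, h2⟩
    refine ⟨linearIndependent_iff.2 fun q hq => ?_, h2 _ fun x => Submodule.subset_span ⟨x, rfl⟩⟩
    rw [key] at hq
    exact h1 q (Prod.ext_iff.1 hq).1 (Prod.ext_iff.1 hq).2

theorem lif_aux (f : ℝ → ℝ) (h1 : LinearIndependent ℚ ((↑) : graph f → ℝ × ℝ)) :
      (∀ q : ℝ →₀ ℚ, Finsupp.linearCombination ℚ (id : ℝ → ℝ) q = 0 →
        Finsupp.linearCombination ℚ f q = 0 → q = 0) := by
  have hinj : Function.Injective (fun x : ℝ => (x, f x)) := fun x y h => (Prod.ext_iff.1 h).1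
  unfold graph at h1
  rw [linearIndepOn_range_aux hinj] at h1
  have key : ∀ q : ℝ →₀ ℚ, Finsupp.linearCombination ℚ (fun x : ℝ => (x, f x)) q =
      (Finsupp.linearCombination ℚ (id : ℝ → ℝ) q, Finsupp.linearCombination ℚ f q) := by
    intro q
    simp only [Finsupp.linearCombination_apply, Finsupp.sum]
    ext <;> simp [Prod.fst_sum, Prod.snd_sum]
  intro q a b
  refine linearIndependent_iff.1 h1 q ?_
  rw [key, a, b]; rfl

/-- Second half: extending to a Hamel function `h`. -/
theorem extend_aux (f g : ℝ → ℝ) (hf : IsHamelFunction f) (finj : Function.Injective f)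
    (hE : Cardinal.mk ((Set.range f)ᶜ : Set ℝ) = Cardinal.continuum)
    (lam N : ℝ →ₗ[ℚ] ℝ) (hN : Function.Injective N)
    (hQ : Module.rank ℚ (ℝ ⧸ LinearMap.range N) = Cardinal.continuum)
    (hg : ∀ x, g x = lam (f x) + N x) :
    ∃ h : ℝ → ℝ, IsHamelFunction h ∧ g = h ∘ f := by
  classical
  rw [hamel_iff_aux] at hf
  obtain ⟨hf1, hf2⟩ := hf
  let b0 := Module.Basis.ofVectorSpace ℚ (ℝ ⧸ LinearMap.range N)
  have hcard : Cardinal.mk (Module.Basis.ofVectorSpaceIndex ℚ (ℝ ⧸ LinearMap.range N)) =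
      Cardinal.mk ((Set.range f)ᶜ : Set ℝ) := by
    rw [hE, ← hQ]; exact b0.mk_eq_rank''
  obtain ⟨e⟩ := Cardinal.eq.1 hcard
  let b := b0.reindex e
  choose k hk using fun y => Submodule.mkQ_surjective (LinearMap.range N) (b y)
  let k' : ℝ → ℝ := fun y => if hy : y ∈ (Set.range f)ᶜ then k ⟨y, hy⟩ else
    N (Function.invFun f y)
  have k'f : ∀ x, k' (f x) = N x := by
    intro x
    simp [k', Function.leftInverse_invFun finj x]
  have k'e : ∀ y : ((Set.range f)ᶜ : Set ℝ), (LinearMap.range N).mkQ (k' y) = b y := by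
    intro y
    have : k' y = k y := by
      simp only [k']; rw [dif_pos y.2]
    rw [this, hk]
  refine ⟨fun y => lam y + k' y, ?_, ?_⟩
  swap
  · funext x; simp [k'f, hg]
  rw [hamel_iff_aux]
  constructor
  · intro q q1 q2
    have q3 : Finsupp.linearCombination ℚ k' q = 0 := by
      have : Finsupp.linearCombination ℚ (fun y => lam y + k' y) q =
          lam (Finsupp.linearCombination ℚ id q) + Finsupp.linearCombination ℚ k' q := by
        simp [Finsupp.linearCombination_apply, Finsupp.sum, Finset.sum_add_distrib, smul_add]
      rw [q1, q2] at this
      simpa using this.symm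
    -- q vanishes off the range of f
    have q4 : ∀ y : ((Set.range f)ᶜ : Set ℝ), q y = 0 := by
      have h0 : Finsupp.linearCombination ℚ b (q.comapDomain Subtype.val
          Subtype.val_injective.injOn) = 0 := by
        have h1 := congrArg (LinearMap.range N).mkQ q3
        rw [map_zero, Finsupp.apply_linearCombination] at h1
        rw [← h1]
        have h2 : (b : _ → _) = ((LinearMap.range N).mkQ ∘ k') ∘ Subtype.val := by
          funext y; simp only [Function.comp]; rw [k'e]
        rw [h2, ← Finsupp.linearCombination_mapDomain]
        rw [← sub_eq_zero, ← map_sub, Finsupp.linearCombination_apply]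
        apply Finset.sum_eq_zero
        intro y _
        by_cases hy : y ∈ Set.range f
        · obtain ⟨x, rfl⟩ := hy
          have : (LinearMap.range N).mkQ (k' (f x)) = 0 := by
            rw [k'f]; simp
          simp only [Function.comp]; rw [this, smul_zero]
        · have : (Finsupp.mapDomain Subtype.val (q.comapDomain (Subtype.val :
              ((Set.range f)ᶜ : Set ℝ) → ℝ) Subtype.val_injective.injOn)) y = q y := by
            have := Finsupp.mapDomain_apply Subtype.val_injective (q.comapDomain (Subtype.val :
              ((Set.range f)ᶜ : Set ℝ) → ℝ) Subtype.val_injective.injOn) ⟨y, hy⟩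
            simpa using this
          simp [this]
      have h3 := linearIndependent_iff.1 b.linearIndependent _ h0
      intro y
      simpa using DFunLike.congr_fun h3 y
    let r : ℝ →₀ ℚ := q.comapDomain f finj.injOn
    have hr : Finsupp.mapDomain f r = q := by
      apply Finsupp.mapDomain_comapDomain _ finj
      intro y hy
      by_contra hy'
      exact (Finsupp.mem_support_iff.1 hy) (q4 ⟨y, hy'⟩)
    have r0 : r = 0 := by
      apply hf1
      · apply hN
        rw [map_zero, Finsupp.apply_linearCombination, ← q3, ← hr,
          Finsupp.linearCombination_mapDomain]
        congr 1
        congr 1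
        funext x; simp [k'f]
      · rw [← q1, ← hr, Finsupp.linearCombination_mapDomain]; rfl
    rw [← hr, r0, Finsupp.mapDomain_zero]
  · intro p hp
    have s1 : ∀ x y : ℝ, (y, lam y + N x) ∈ p := by
      let D : ℝ × ℝ →ₗ[ℚ] ℝ × ℝ := (LinearMap.snd ℚ ℝ ℝ).prod
        (lam ∘ₗ LinearMap.snd ℚ ℝ ℝ + N ∘ₗ LinearMap.fst ℚ ℝ ℝ)
      have := hf2 (p.comap D) (fun x => by
        have := hp (f x)
        simp only [k'f] at this
        simpa [D] using this)
      intro x y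
      have h : (x, y) ∈ p.comap D := by rw [this]; trivial
      simpa [D] using h
    have s2 : ∀ y : ℝ, (y, lam y) ∈ p := fun y => by simpa using s1 0 y
    have s3 : ∀ x : ℝ, ((0 : ℝ), N x) ∈ p := fun x => by simpa using s1 x 0
    have s4 : ∀ y : ℝ, ((0 : ℝ), k' y) ∈ p := fun y => by
      simpa using p.sub_mem (hp y) (s2 y)
    let P := p.comap (LinearMap.inr ℚ ℝ ℝ)
    have hP : P = ⊤ := by
      have h1 : LinearMap.range N ≤ P := by
        rintro _ ⟨x, rfl⟩; exact s3 x
      have h2 : P.map (LinearMap.range N).mkQ = ⊤ := by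
        rw [eq_top_iff, ← b.span_eq, Submodule.span_le]
        rintro _ ⟨y, rfl⟩
        exact ⟨k' y, s4 y, k'e y⟩
      have h3 := congrArg (Submodule.comap (LinearMap.range N).mkQ) h2
      rw [Submodule.comap_map_mkQ, Submodule.comap_top] at h3
      rwa [sup_eq_right.2 h1] at h3
    rw [eq_top_iff]
    rintro ⟨y, z⟩ -
    have h4 : z - lam y ∈ P := by rw [hP]; trivial
    have h5 : ((0 : ℝ), z - lam y) ∈ p := h4
    simpa using p.add_mem (s2 y) h5

set_option maxHeartbeats 1000000 in
theorem stmt_9 (g : ℝ → ℝ)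
    (hg : LinearIndependent ℚ ((↑) : graph g → ℝ × ℝ)) :
    ∃ h f : ℝ → ℝ, IsHamelFunction h ∧ IsHamelFunction f ∧ g = h ∘ f := by
  classical
  have hg1 := lif_aux g hg
  let S : Set ℝ := Module.Basis.ofVectorSpaceIndex ℚ ℝ
  let B : Module.Basis S ℚ ℝ := Module.Basis.ofVectorSpace ℚ ℝ
  have hB : ∀ b : S, B b = (b : ℝ) := fun b => Module.Basis.ofVectorSpace_apply_self ℚ ℝ b
  have hSc : Cardinal.mk S = Cardinal.continuum := by
    rw [← Real.rank_rat_real]; exact B.mk_eq_rank''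
  -- multiples of basis vectors
  have hmul : ∀ (b : S) (c : ℚ), c ≠ 1 → c • (b : ℝ) ∉ S := by
    intro b c hc hmem
    have h1 : B ⟨_, hmem⟩ = c • B b := by rw [hB, hB]
    have h2 := congrArg B.repr h1
    rw [map_smul, B.repr_self, B.repr_self, Finsupp.smul_single, smul_eq_mul, mul_one] at h2
    rcases (Finsupp.single_eq_single_iff _ _ _ _).1 h2 with ⟨_, h⟩ | ⟨h, _⟩
    · exact hc h.symm
    · exact one_ne_zero h
  have hneg : ∀ b : S, -(b : ℝ) ∉ S := by
    intro b; have := hmul b (-1) (by norm_num); simpa using this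
  have hι : Cardinal.mk (Sᶜ : Set ℝ) = Cardinal.continuum := by
    apply le_antisymm
    · rw [← Cardinal.mk_real]; exact Cardinal.mk_set_le _
    · rw [← hSc]
      exact Cardinal.mk_le_of_injective (f := fun b : S => (⟨-(b : ℝ), hneg b⟩ : (Sᶜ : Set ℝ)))
        (fun a b h => Subtype.ext (by simpa using h))
  obtain ⟨Φ⟩ : Nonempty (((Sᶜ : Set ℝ) →₀ ℚ) ≃ₗ[ℚ] ℝ) := by
    apply nonempty_linearEquiv_of_rank_eq
    rw [Real.rank_rat_real, rank_finsupp_self', hι]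
  let δ : ℝ → ((Sᶜ : Set ℝ) →₀ ℚ) := fun x => if hx : x ∈ (Sᶜ : Set ℝ) then Finsupp.single ⟨x, hx⟩ 1 else 0
  have δS : ∀ b : S, δ b = 0 := fun b => by
    have : (b : ℝ) ∉ (Sᶜ : Set ℝ) := fun h => h b.2
    simp only [δ]; rw [dif_neg this]
  have δι : ∀ i : (Sᶜ : Set ℝ), δ i = Finsupp.single i 1 := fun i => by
    simp only [δ]; rw [dif_pos i.2]
  let G : ℝ →ₗ[ℚ] ℝ := B.constr ℚ (fun b => g b)
  have hG : ∀ b : S, G b = g b := fun b => by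
    rw [← hB b]; simp only [G]; rw [Module.Basis.constr_basis, hB]
  let s : ((Sᶜ : Set ℝ) →₀ ℚ) →ₗ[ℚ] ℝ := Finsupp.linearCombination ℚ (fun i : (Sᶜ : Set ℝ) => g i - G i)
  have hs : ∀ x, g x = G x + s (δ x) := by
    intro x
    by_cases hx : x ∈ S
    · rw [δS ⟨x, hx⟩, hG ⟨x, hx⟩]; simp
    · rw [δι ⟨x, hx⟩]; simp [s]
  -- general fact
  have hδ0 : ∀ q : ℝ →₀ ℚ, Finsupp.linearCombination ℚ (id : ℝ → ℝ) q = 0 →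
      Finsupp.linearCombination ℚ δ q = 0 → q = 0 := by
    intro q q1 q2
    have h1 : ∀ i : (Sᶜ : Set ℝ), q i = 0 := by
      intro i
      have h := DFunLike.congr_fun q2 i
      rw [Finsupp.linearCombination_apply, Finsupp.sum, Finsupp.finsetSum_apply] at h
      rw [Finset.sum_eq_single (i : ℝ)] at h
      · simpa [δι] using h
      · intro y _ hy
        by_cases hyS : y ∈ S
        · rw [δS ⟨y, hyS⟩]; simp
        · rw [δι ⟨y, hyS⟩, Finsupp.smul_apply, Finsupp.single_apply, if_neg, smul_zero]
          rintro rfl; exact hy rfl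
      · intro hi; simp [Finsupp.notMem_support_iff.1 hi]
    let r : S →₀ ℚ := q.comapDomain Subtype.val Subtype.val_injective.injOn
    have hr : Finsupp.mapDomain Subtype.val r = q := by
      apply Finsupp.mapDomain_comapDomain _ Subtype.val_injective
      intro y hy
      by_contra hy'
      refine (Finsupp.mem_support_iff.1 hy) (h1 ⟨y, fun h => hy' ⟨⟨y, h⟩, rfl⟩⟩)
    have r0 : r = 0 := by
      apply linearIndependent_iff.1 B.linearIndependent
      rw [← q1, ← hr, Finsupp.linearCombination_mapDomain]
      congr 1; congr 1; funext b; simp [hB]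
    rw [← hr, r0, Finsupp.mapDomain_zero]
  have hsδ : ∀ q : ℝ →₀ ℚ, Finsupp.linearCombination ℚ g q =
      G (Finsupp.linearCombination ℚ id q) + s (Finsupp.linearCombination ℚ δ q) := by
    intro q
    rw [Finsupp.apply_linearCombination, Finsupp.apply_linearCombination]
    simp only [Finsupp.linearCombination_apply, Finsupp.sum, ← Finset.sum_add_distrib]
    refine Finset.sum_congr rfl fun x _ => ?_
    rw [← smul_add, hs x]; rfl
  -- s injective
  have sinj : Function.Injective s := by
    rw [← LinearMap.ker_eq_bot, LinearMap.ker_eq_bot']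
    intro v hv
    let v' : ℝ →₀ ℚ := Finsupp.mapDomain Subtype.val v
    let y : ℝ := Finsupp.linearCombination ℚ id v'
    let c : ℝ →₀ ℚ := Finsupp.mapDomain Subtype.val (B.repr y)
    have hc1 : Finsupp.linearCombination ℚ id c = y := by
      rw [Finsupp.linearCombination_mapDomain]
      conv_rhs => rw [← B.linearCombination_repr y]
      congr 1; congr 1; funext b; simp [hB]
    have hc2 : Finsupp.linearCombination ℚ δ c = 0 := by
      rw [Finsupp.linearCombination_mapDomain]
      have : δ ∘ (Subtype.val : S → ℝ) = 0 := by funext b; exact δS b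
      rw [this]; simp
    have hv2 : Finsupp.linearCombination ℚ δ v' = v := by
      rw [Finsupp.linearCombination_mapDomain]
      have : δ ∘ (Subtype.val : (Sᶜ : Set ℝ) → ℝ) = fun i => Finsupp.single i 1 := by
        funext b; exact δι b
      rw [this]
      simp [Finsupp.linearCombination_apply]
    have h0 : Finsupp.linearCombination ℚ id (v' - c) = 0 := by
      rw [map_sub, hc1]; exact sub_self _
    have h1 : Finsupp.linearCombination ℚ δ (v' - c) = v := by
      rw [map_sub, hc2, hv2, sub_zero]
    have h2 := hg1 (v' - c) h0 (by rw [hsδ, h0, h1, hv]; simp)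
    rw [← h1, h2, map_zero]
  -- the map A
  obtain ⟨α⟩ : Nonempty (S ≃ ℝ × ℝ) := by
    apply Cardinal.eq.1
    rw [hSc, Cardinal.mk_prod]; simp [Cardinal.mk_real]
  let a : (Sᶜ : Set ℝ) → ℝ × (ℝ × ℝ) := fun i =>
    if hi : -(i : ℝ) ∈ S then (0, α ⟨_, hi⟩) else (-2 * (i : ℝ), 0)
  let A : ((Sᶜ : Set ℝ) →₀ ℚ) →ₗ[ℚ] ℝ × (ℝ × ℝ) := Finsupp.linearCombination ℚ a
  have hA : LinearMap.range A = ⊤ := by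
    have h1 : ∀ z : ℝ × ℝ, ((0 : ℝ), z) ∈ LinearMap.range A := by
      intro z
      refine ⟨Finsupp.single ⟨-((α.symm z : S) : ℝ), hneg _⟩ 1, ?_⟩
      simp [A, a]
    have h2 : ∀ y : ℝ, (y, (0 : ℝ × ℝ)) ∈ LinearMap.range A := by
      have : (LinearMap.range A).comap (LinearMap.inl ℚ ℝ (ℝ × ℝ)) = ⊤ := by
        rw [eq_top_iff, ← B.span_eq, Submodule.span_le]
        rintro _ ⟨b, rfl⟩
        have e1 : (2 : ℝ) * b ∉ S := by
          have := hmul b 2 (by norm_num)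
          rwa [Rat.smul_def] at this
        have e2 : -((2 : ℝ) * b) ∉ S := by
          have := hmul b (-2) (by norm_num)
          rw [Rat.smul_def] at this
          simpa using this
        refine ⟨Finsupp.single ⟨(2 : ℝ) * b, e1⟩ (-1/4), ?_⟩
        have e3 : a ⟨(2 : ℝ) * b, e1⟩ = (-2 * (2 * (b : ℝ)), 0) := by
          simp only [a]; rw [dif_neg e2]
        simp only [A, Finsupp.linearCombination_single, e3, hB, LinearMap.inl_apply, Prod.smul_mk,
          smul_zero, Rat.smul_def]
        congr 1
        push_cast; ring
      intro y
      have h : y ∈ (LinearMap.range A).comap (LinearMap.inl ℚ ℝ (ℝ × ℝ)) := by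
        rw [this]; trivial
      exact h
    rw [eq_top_iff]
    rintro ⟨y, z⟩ -
    simpa using (LinearMap.range A).add_mem (h2 y) (h1 z)
  obtain ⟨R, hR⟩ := A.exists_rightInverse_of_surjective hA
  have hR' : ∀ z, A (R z) = z := fun z => LinearMap.congr_fun hR z
  obtain ⟨l, hl⟩ := s.exists_leftInverse_of_injective (LinearMap.ker_eq_bot.2 sinj)
  have hl' : ∀ v, l (s v) = v := fun v => LinearMap.congr_fun hl v
  let P : ℝ →ₗ[ℚ] ℝ × ℝ := LinearMap.snd ℚ ℝ (ℝ × ℝ) ∘ₗ A ∘ₗ l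
  let m : ℝ →ₗ[ℚ] ((Sᶜ : Set ℝ) →₀ ℚ) := R ∘ₗ (LinearMap.id.prod (P ∘ₗ G - LinearMap.inl ℚ ℝ ℝ))
  have hm : ∀ x, A (m x) = (x, P (G x) - (x, 0)) := fun x => by
    simp only [m, LinearMap.comp_apply]; rw [hR']; rfl
  let N : ℝ →ₗ[ℚ] ℝ := G - s ∘ₗ m
  have hPN : ∀ x, P (N x) = (x, 0) := by
    intro x
    have : P (s (m x)) = P (G x) - (x, 0) := by
      simp only [P, LinearMap.comp_apply]; rw [hl', hm]; rfl
    simp only [N, LinearMap.sub_apply, LinearMap.comp_apply, map_sub, this]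
    abel
  have Ninj : Function.Injective N := by
    intro x y h
    have := congrArg P h
    rw [hPN, hPN] at this
    exact (Prod.ext_iff.1 this).1
  let f : ℝ → ℝ := fun x => Φ (δ x + m x)
  have hu : Function.Injective (fun x => (A (δ x + m x)).1) := by
    have h1 : ∀ x, (A (δ x + m x)).1 = if x ∈ S ∨ -x ∈ S then x else -x := by
      intro x
      rw [map_add, hm]
      by_cases hx : x ∈ S
      · rw [δS ⟨x, hx⟩]; simp [hx]
      · rw [δι ⟨x, hx⟩]
        by_cases hx' : -x ∈ S
        · simp [A, a, hx']
        · simp [A, a, hx, hx']; ring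
    intro x y h
    simp only [h1] at h
    split_ifs at h with p q q
    · exact h
    · exfalso; apply q; rw [h] at p; rw [neg_neg] at p; exact p.symm
    · exfalso; apply p; rw [← h] at q; rw [neg_neg] at q; exact q.symm
    · exact neg_injective h
  have finj : Function.Injective f := by
    intro x y h
    apply hu
    simp only
    rw [Φ.injective h]
  have hfH : IsHamelFunction f := by
    rw [hamel_iff_aux]
    constructor
    · intro q q1 q2
      apply hδ0 q q1
      have h1 : Finsupp.linearCombination ℚ f q =
          Φ (Finsupp.linearCombination ℚ δ q + m (Finsupp.linearCombination ℚ id q)) := by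
        rw [map_add, Finsupp.apply_linearCombination ℚ m]
        rw [← LinearEquiv.coe_coe, Finsupp.apply_linearCombination, Finsupp.apply_linearCombination]
        simp only [Finsupp.linearCombination_apply, Finsupp.sum, ← Finset.sum_add_distrib]
        refine Finset.sum_congr rfl fun x _ => ?_
        rw [← smul_add]; simp [f]
      rw [q1, q2, map_zero, add_zero] at h1
      exact Φ.injective (by rw [← h1, map_zero])
    · intro p hp
      have h1 : ∀ y, (y, Φ (m y)) ∈ p := by
        have : p.comap (LinearMap.id.prod (Φ.toLinearMap ∘ₗ m)) = ⊤ := by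
          rw [eq_top_iff, ← B.span_eq, Submodule.span_le]
          rintro _ ⟨b, rfl⟩
          have := hp b
          simp only [f, δS, zero_add] at this
          rw [hB]
          exact this
        intro y
        have h : y ∈ p.comap (LinearMap.id.prod (Φ.toLinearMap ∘ₗ m)) := by rw [this]; trivial
        exact h
      have h2 : ∀ x, ((0 : ℝ), Φ (δ x)) ∈ p := by
        intro x
        have := p.sub_mem (hp x) (h1 x)
        simpa [f] using this
      have h3 : ∀ v, ((0 : ℝ), Φ v) ∈ p := by
        intro v
        induction v using Finsupp.induction_linear with
        | zero => rw [map_zero]; exact p.zero_mem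
        | add v w hv hw => simpa using p.add_mem hv hw
        | single i c =>
          have := p.smul_mem c (h2 i)
          rw [δι] at this
          rw [Prod.smul_mk, smul_zero, ← map_smul, Finsupp.smul_single, smul_eq_mul, mul_one] at this
          exact this
      rw [eq_top_iff]
      rintro ⟨y, z⟩ -
      have := p.add_mem (h1 y) (h3 (Φ.symm (z - Φ (m y))))
      simpa using this
  have hE : Cardinal.mk ((Set.range f)ᶜ : Set ℝ) = Cardinal.continuum := by
    apply le_antisymm
    · rw [← Cardinal.mk_real]; exact Cardinal.mk_set_le _
    · rw [← Cardinal.mk_real]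
      apply Cardinal.mk_le_of_surjective
        (f := fun y : ((Set.range f)ᶜ : Set ℝ) => (A (Φ.symm y)).1)
      intro t
      by_cases c1 : Φ (R (t, 0)) ∈ Set.range f
      · by_cases c2 : Φ (R (t, (1, 0))) ∈ Set.range f
        · exfalso
          obtain ⟨x, hx⟩ := c1
          obtain ⟨y, hy⟩ := c2
          have hx := Φ.injective hx
          have hy := Φ.injective hy
          have hxy : x = y := hu (by simp only; rw [hx, hy, hR', hR'])
          subst hxy
          have h := congrArg A (hx.symm.trans hy)
          rw [hR', hR'] at h
          simp [Prod.ext_iff] at h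
        · exact ⟨⟨_, c2⟩, by simp [hR']⟩
      · exact ⟨⟨_, c1⟩, by simp [hR']⟩
  have hQ : Module.rank ℚ (ℝ ⧸ LinearMap.range N) = Cardinal.continuum := by
    apply le_antisymm
    · rw [← Real.rank_rat_real]; exact LinearMap.rank_le_of_surjective _ (Submodule.mkQ_surjective _)
    · rw [← Real.rank_rat_real]
      let θ : (ℝ ⧸ LinearMap.range N) →ₗ[ℚ] ℝ :=
        (LinearMap.range N).liftQ (LinearMap.snd ℚ ℝ ℝ ∘ₗ P) (by
          rintro _ ⟨x, rfl⟩
          simp [hPN])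
      apply LinearMap.rank_le_of_surjective θ
      intro t
      refine ⟨(LinearMap.range N).mkQ (s (R (0, (0, t)))), ?_⟩
      simp [θ, P, hl', hR']
  obtain ⟨h, h1, h2⟩ := extend_aux f g hfH finj hE (s ∘ₗ Φ.symm.toLinearMap) N Ninj hQ (by
    intro x
    rw [hs x]
    simp [f, N]
    exact add_comm _ _)
  exact ⟨h, f, h1, hfH, h2⟩
end

section
/- There exists a Hamel function f : ℝ → ℝ whose range {f x : x ∈ ℝ} is a ℚ-linearly independent subset of ℝ (with ℝ regarded as a vector space over ℚ). -/
theorem stmt_10 :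
    ∃ f : ℝ → ℝ, IsHamelFunction f ∧
      LinearIndependent ℚ ((↑) : Set.range f → ℝ) := by
  classical
  let C : Set ℝ := Module.Basis.ofVectorSpaceIndex ℚ ℝ
  let b : Module.Basis C ℚ ℝ := Module.Basis.ofVectorSpace ℚ ℝ
  have hb : ∀ c : C, b c = (c : ℝ) := fun c => Module.Basis.ofVectorSpace_apply_self ℚ ℝ c
  have h0 : (0 : ℝ) ∉ C := fun h => b.ne_zero ⟨0, h⟩ (hb _)
  have h2 : ∀ c : C, 2 * (c : ℝ) ∉ C := by
    intro c h
    have hne : (⟨2 * (c : ℝ), h⟩ : C) ≠ c := by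
      intro h'
      have h3 : 2 * (c : ℝ) = c := congrArg Subtype.val h'
      exact b.ne_zero c ((hb c).trans (by linarith))
    have h4 : b ⟨2 * (c : ℝ), h⟩ = (2 : ℚ) • b c := by
      rw [hb, hb, Rat.smul_def]; norm_num
    have h5 := congrArg (fun v => b.repr v c) h4
    simp [hne] at h5
  have hC : Cardinal.mk C = Cardinal.continuum := by
    have := b.mk_eq_rank''
    rw [this, Real.rank_rat_real]
  have hCc : Cardinal.mk (Cᶜ : Set ℝ) = Cardinal.mk C := by
    apply le_antisymm
    · rw [hC, ← Cardinal.mk_real]; exact Cardinal.mk_set_le _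
    · refine Cardinal.mk_le_of_injective (f := fun c : C => (⟨2 * (c : ℝ), h2 c⟩ : (Cᶜ : Set ℝ))) ?_
      intro c d h
      have h3 : 2 * (c : ℝ) = 2 * d := congrArg Subtype.val h
      exact Subtype.ext (by linarith)
  obtain ⟨e⟩ := Cardinal.eq.1 hCc
  let b' : Module.Basis (Cᶜ : Set ℝ) ℚ ℝ := b.reindex e.symm
  let z : (Cᶜ : Set ℝ) := ⟨0, h0⟩
  let f : ℝ → ℝ := fun x => if h : x ∈ C then b' z else b' ⟨x, h⟩
  let L : ℝ →ₗ[ℚ] ℝ := b'.constr ℚ (fun a => (a : ℝ))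
  let s : ℝ →ₗ[ℚ] ℝ := b.constr ℚ (fun _ => b' z)
  have hL : ∀ a, L (b' a) = a := fun a => b'.constr_basis ℚ _ a
  have hs : ∀ c, s (b c) = b' z := fun c => b.constr_basis ℚ _ c
  let T1 : (ℝ × ℝ) ≃ₗ[ℚ] (ℝ × ℝ) :=
    LinearEquiv.skewProd (LinearEquiv.refl ℚ ℝ) (LinearEquiv.refl ℚ ℝ) s
  let T2 : (ℝ × ℝ) ≃ₗ[ℚ] (ℝ × ℝ) :=
    (LinearEquiv.prodComm ℚ ℝ ℝ).trans ((LinearEquiv.skewProd (LinearEquiv.refl ℚ ℝ)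
      (LinearEquiv.refl ℚ ℝ) L).trans (LinearEquiv.prodComm ℚ ℝ ℝ))
  let B := (b.prod b').map (T1.trans T2)
  have hB1 : ∀ c : C, B (Sum.inl c) = ((c : ℝ), f c) := by
    intro c
    have hf : f c = b' z := dif_pos c.2
    rw [hf]
    have hs' : s (c : ℝ) = b' z := by rw [← hb, hs]
    have hL' : L (b' z) = 0 := hL z
    simp [B, T1, T2, hs', hL', hb]
  have hB2 : ∀ a : (Cᶜ : Set ℝ), B (Sum.inr a) = ((a : ℝ), f a) := by
    intro a
    have hf : f a = b' a := dif_neg a.2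
    rw [hf]
    simp [B, T1, T2, hL]
  have hg : graph f = Set.range B := by
    ext p
    constructor
    · rintro ⟨x, rfl⟩
      by_cases h : x ∈ C
      · exact ⟨Sum.inl ⟨x, h⟩, hB1 _⟩
      · exact ⟨Sum.inr ⟨x, h⟩, hB2 _⟩
    · rintro ⟨c | a, rfl⟩
      · exact ⟨c, (hB1 c).symm⟩
      · exact ⟨a, (hB2 a).symm⟩
  refine ⟨f, ⟨?_, ?_⟩, ?_⟩
  · rw [hg]; exact B.linearIndependent.linearIndepOn_id
  · rw [hg]; exact B.span_eq
  · have hr : Set.range f ⊆ Set.range b' := by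
      rintro _ ⟨x, rfl⟩
      by_cases h : x ∈ C
      · exact ⟨z, by simp only [f, dif_pos h]⟩
      · exact ⟨⟨x, h⟩, by simp only [f, dif_neg h]⟩
    exact LinearIndepOn.mono (b'.linearIndependent.linearIndepOn_id) hr
end
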